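/- arXiv:1511.09073 — 2 statements merged into one kernel-verified Lean document; each statement's English description precedes it below -/
import Mathlib

section
/- Let n ≥ 13 and let H be as in the Setup (a connected {P,C}-free 3-graph on n vertices containing a copy of P_2 ∪ K_3, with U, W_0, W_1 and H_1 defined from a fixed such copy). If W_0 = ∅ and H_1 ≠ ∅, then |H| < 10 + binom(n−6, 2). -/
/-- A 3-graph: a finite vertex set together with a finite set of edges
(intended to be 3-element subsets of the vertex set). -/
structure ThreeGraph where
  verts : Finset ℕ
  edges : Finset (Finset ℕ)

namespace ThreeGraph

/-- `G` is a genuine 3-uniform hypergraph: every edge is a 3-element subset of the vertex set. -/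
def IsValid (G : ThreeGraph) : Prop :=
  ∀ e ∈ G.edges, e.card = 3 ∧ e ⊆ G.verts

/-- `H.ContainsCopy F` means `F ⊆ H`: there is an injective map of the vertices of `F`
into those of `H` carrying every edge of `F` to an edge of `H`. -/
def ContainsCopy (H F : ThreeGraph) : Prop :=
  ∃ f : ℕ → ℕ, Set.InjOn f ↑F.verts ∧ (∀ v ∈ F.verts, f v ∈ H.verts) ∧
    ∀ e ∈ F.edges, e.image f ∈ H.edges

/-- `H.Free F` : `H` contains no copy of `F`. -/
def Free (H F : ThreeGraph) : Prop := ¬ H.ContainsCopy F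

/-- `IsoCopy F H` : `H` is isomorphic to `F`. -/
def IsoCopy (F H : ThreeGraph) : Prop :=
  ∃ f : ℕ → ℕ, Set.InjOn f ↑F.verts ∧ F.verts.image f = H.verts ∧
    F.edges.image (Finset.image f) = H.edges

/-- Connectivity: any two vertices are joined by a sequence of vertices in which
consecutive ones lie in a common edge. -/
def Connected (G : ThreeGraph) : Prop :=
  ∀ u ∈ G.verts, ∀ v ∈ G.verts,
    Relation.ReflTransGen (fun a b => ∃ e ∈ G.edges, a ∈ e ∧ b ∈ e) u v

/-- Shift all vertices by `k`. -/
def shiftBy (G : ThreeGraph) (k : ℕ) : ThreeGraph :=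
  ⟨G.verts.image (· + k), G.edges.image (Finset.image (· + k))⟩

/-- Vertex-disjoint union of two 3-graphs. -/
def dUnion (G H : ThreeGraph) : ThreeGraph :=
  ⟨G.verts ∪ (H.shiftBy (G.verts.sup id + 1)).verts,
   G.edges ∪ (H.shiftBy (G.verts.sup id + 1)).edges⟩

end ThreeGraph

/-- The loose 3-uniform path of length 3. -/
def pathP : ThreeGraph :=
  ⟨{0,1,2,3,4,5,6}, {{0,1,2},{2,3,4},{4,5,6}}⟩

/-- The triangle `C`. -/
def triangleC : ThreeGraph :=
  ⟨{0,1,2,3,4,5}, {{0,1,2},{2,3,4},{4,5,0}}⟩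

/-- The matching `M`: two disjoint edges. -/
def matchingM : ThreeGraph :=
  ⟨{0,1,2,3,4,5}, {{0,1,2},{3,4,5}}⟩

/-- `P_2`: two edges sharing exactly one vertex. -/
def pairP2 : ThreeGraph :=
  ⟨{0,1,2,3,4}, {{0,1,2},{2,3,4}}⟩

/-- The complete 3-graph `K_n`. -/
def KK (n : ℕ) : ThreeGraph :=
  ⟨Finset.range n, (Finset.range n).powersetCard 3⟩

/-- The full star `S_n` with center `0`. -/
def SS (n : ℕ) : ThreeGraph :=
  ⟨Finset.range n, ((Finset.range n).powersetCard 3).filter (fun e => 0 ∈ e)⟩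

/-- `G_1(n)` with `x,y,z,v = 0,1,2,3`. -/
def G1 (n : ℕ) : ThreeGraph :=
  ⟨Finset.range n,
   insert {0,1,2}
     (((Finset.range n).powersetCard 3).filter
       (fun h => 3 ∈ h ∧ (h ∩ ({0,1,2} : Finset ℕ)).Nonempty))⟩

/-- `G_2(n)` with `x,y,z = 0,1,2`. -/
def G2 (n : ℕ) : ThreeGraph :=
  ⟨Finset.range n,
   insert {0,1,2}
     (((Finset.range n).powersetCard 3).filter
       (fun h => (h ∩ ({0,1,2} : Finset ℕ)).card = 2))⟩

/-- `G_3(n)` with `x,y₁,y₂,z₁,z₂ = 0,1,2,3,4`. -/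
def G3 (n : ℕ) : ThreeGraph :=
  ⟨Finset.range n,
   ((({0,1,2,3,4} : Finset ℕ).powersetCard 3) \ {{1,2,3},{1,2,4}}) ∪
     ((Finset.range n \ ({0,1,2,3,4} : Finset ℕ)).biUnion (fun w => {{0,3,w},{0,4,w}}))⟩

/-- `K_5^{+t}`: `K_5` on `{0,…,4}` with `a,b = 0,1` and `t` pendant edges `{0,1,v}`. -/
def K5plus (t : ℕ) : ThreeGraph :=
  ⟨Finset.range (5 + t),
   ((Finset.range 5).powersetCard 3) ∪ ((Finset.Ico 5 (5 + t)).image (fun v => {0,1,v}))⟩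

/-- The comet `Co(n)`: a `K_4` on `{0,1,2,3}` and a full star on `{0} ∪ {4,…,n-1}`
with center `0`. -/
def comet (n : ℕ) : ThreeGraph :=
  ⟨Finset.range n,
   (({0,1,2,3} : Finset ℕ).powersetCard 3) ∪
     (((insert 0 (Finset.Ico 4 n)).powersetCard 3).filter (fun e => 0 ∈ e))⟩

/-- `W = V(H) \ U`. -/
def Wset (H : ThreeGraph) (U : Finset ℕ) : Finset ℕ := H.verts \ U

/-- `W_0`: the vertices of `W` lying in no edge of `H` entirely contained in `W`. -/
def W0set (H : ThreeGraph) (U : Finset ℕ) : Finset ℕ :=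
  (Wset H U).filter (fun v => ∀ e ∈ H.edges, e ⊆ Wset H U → v ∉ e)

/-- `W_1 = W \ W_0`. -/
def W1set (H : ThreeGraph) (U : Finset ℕ) : Finset ℕ :=
  Wset H U \ W0set H U

/-- `H_1`: the edges of `H` meeting both `U` and `W_1`. -/
def H1set (H : ThreeGraph) (U : Finset ℕ) : Finset (Finset ℕ) :=
  H.edges.filter (fun e => (e ∩ U).Nonempty ∧ (e ∩ W1set H U).Nonempty)

/-- `H[U]`: the edges of `H` entirely contained in `U`. -/
def HUset (H : ThreeGraph) (U : Finset ℕ) : Finset (Finset ℕ) :=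
  H.edges.filter (fun e => e ⊆ U)


/-- `e` and `f` meet exactly in the vertex `p`. -/
def M1 (e f : Finset ℕ) (p : ℕ) : Prop := p ∈ e ∧ p ∈ f ∧ ∀ x ∈ e, x ∈ f → x = p

/-- Set-level formulation of being a `{P,C}`-free family of triples. -/
def Good (E : Finset (Finset ℕ)) : Prop :=
  (∀ e ∈ E, e.card = 3) ∧
  (∀ e ∈ E, ∀ f ∈ E, ∀ g ∈ E, ∀ p q, M1 e f p → M1 f g q → (∀ x ∈ e, x ∉ g) → False) ∧
  (∀ e ∈ E, ∀ f ∈ E, ∀ g ∈ E, ∀ p q r, M1 e f p → M1 f g q → M1 g e r → p ∉ g → False)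

theorem Good.mono {E F : Finset (Finset ℕ)} (h : Good E) (hs : F ⊆ E) : Good F :=
  ⟨fun e he => h.1 e (hs he),
   fun e he f hf g hg => h.2.1 e (hs he) f (hs hf) g (hs hg),
   fun e he f hf g hg => h.2.2 e (hs he) f (hs hf) g (hs hg)⟩

theorem three_of_mem {e : Finset ℕ} (h : e.card = 3) {a : ℕ} (ha : a ∈ e) :
    ∃ b c, a ≠ b ∧ a ≠ c ∧ b ≠ c ∧ e = {a, b, c} := by
  have h2 : (e.erase a).card = 2 := by rw [Finset.card_erase_of_mem ha, h]
  obtain ⟨b, c, hbc, hE⟩ := Finset.card_eq_two.1 h2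
  have hb : b ∈ e.erase a := by rw [hE]; simp
  have hc : c ∈ e.erase a := by rw [hE]; simp
  refine ⟨b, c, ?_, ?_, hbc, ?_⟩
  · exact (Finset.ne_of_mem_erase hb).symm
  · exact (Finset.ne_of_mem_erase hc).symm
  · rw [← Finset.insert_erase ha, hE]

theorem three_of_mem2 {e : Finset ℕ} (h : e.card = 3) {a b : ℕ} (ha : a ∈ e) (hb : b ∈ e)
    (hab : a ≠ b) : ∃ c, a ≠ c ∧ b ≠ c ∧ e = {a, b, c} := by
  obtain ⟨p, q, h1, h2, h3, rfl⟩ := three_of_mem h ha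
  simp only [Finset.mem_insert, Finset.mem_singleton] at hb
  rcases hb with hb | hb | hb
  · exact absurd hb.symm hab
  · subst hb; exact ⟨q, h2, h3, rfl⟩
  · subst hb; refine ⟨p, h1, h3.symm, ?_⟩
    ext x; simp; tauto

theorem rot3 (a b c : ℕ) : ({a, b, c} : Finset ℕ) = {c, a, b} := by
  ext x; simp; tauto

theorem swp3 (a b c : ℕ) : ({a, b, c} : Finset ℕ) = {a, c, b} := by
  ext x; simp; tauto

set_option maxHeartbeats 2000000 in
theorem good_of_free (H : ThreeGraph) (hval : H.IsValid) (hP : H.Free pathP)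
    (hC : H.Free triangleC) : Good H.edges := by
  refine ⟨fun e he => (hval e he).1, ?_, ?_⟩
  · intro e he f hf g hg p q h1 h2 h3
    have hpq : p ≠ q := by rintro rfl; exact h3 p h1.1 h2.2.1
    obtain ⟨a, b, ha, hb, hab, rfl⟩ := three_of_mem (hval e he).1 h1.1
    obtain ⟨c, hc, hc', rfl⟩ := three_of_mem2 (hval f hf).1 h1.2.1 h2.1 hpq
    obtain ⟨i, j, hi, hj, hij, rfl⟩ := three_of_mem (hval g hg).1 h2.2.1
    have v1 := (hval _ he).2
    have v2 := (hval _ hf).2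
    have v3 := (hval _ hg).2
    obtain ⟨-, -, k1⟩ := h1
    obtain ⟨-, -, k2⟩ := h2
    simp only [Finset.mem_insert, Finset.mem_singleton, Finset.insert_subset_iff,
      Finset.singleton_subset_iff, forall_eq_or_imp, forall_eq, not_or] at h3 k1 k2 v1 v2 v3
    apply hP
    let F : ℕ → ℕ := fun n => match n with
      | 0 => a | 1 => b | 2 => p | 3 => c | 4 => q | 5 => i | _ => j
    refine ⟨F, ?_, ?_, ?_⟩
    · intro x hx y hy
      simp only [pathP, Finset.coe_insert, Finset.coe_singleton, Set.mem_insert_iff,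
        Set.mem_singleton_iff] at hx hy
      rcases hx with rfl | rfl | rfl | rfl | rfl | rfl | rfl <;>
      rcases hy with rfl | rfl | rfl | rfl | rfl | rfl | rfl <;> simp only [F] <;> grind
    · intro x hx
      simp only [pathP, Finset.mem_insert, Finset.mem_singleton] at hx
      rcases hx with rfl | rfl | rfl | rfl | rfl | rfl | rfl <;> simp only [F] <;> tauto
    · intro x hx
      simp only [pathP, Finset.mem_insert, Finset.mem_singleton] at hx
      rcases hx with rfl | rfl | rfl <;> simp only [F, Finset.image_insert, Finset.image_singleton]
      · convert he using 1; exact rot3 _ _ _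
      · convert hf using 1; exact swp3 _ _ _
      · convert hg using 1
  · intro e he f hf g hg p q r h1 h2 h3 h4
    have hpq : p ≠ q := by rintro rfl; exact h4 h2.2.1
    have hpr : p ≠ r := by rintro rfl; exact h4 h3.1
    have hqr : q ≠ r := by rintro rfl; exact hpq (h1.2.2 q h3.2.1 h2.1).symm
    obtain ⟨a, ha, ha', rfl⟩ := three_of_mem2 (hval e he).1 h1.1 h3.2.1 hpr
    obtain ⟨c, hc, hc', rfl⟩ := three_of_mem2 (hval f hf).1 h1.2.1 h2.1 hpq
    obtain ⟨i, hi, hi', rfl⟩ := three_of_mem2 (hval g hg).1 h2.2.1 h3.1 hqr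
    have v1 := (hval _ he).2
    have v2 := (hval _ hf).2
    have v3 := (hval _ hg).2
    obtain ⟨-, -, k1⟩ := h1
    obtain ⟨-, -, k2⟩ := h2
    obtain ⟨-, -, k3⟩ := h3
    simp only [Finset.mem_insert, Finset.mem_singleton, Finset.insert_subset_iff,
      Finset.singleton_subset_iff, forall_eq_or_imp, forall_eq, not_or] at h4 k1 k2 k3 v1 v2 v3
    apply hC
    let F : ℕ → ℕ := fun n => match n with
      | 0 => r | 1 => a | 2 => p | 3 => c | 4 => q | _ => i
    refine ⟨F, ?_, ?_, ?_⟩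
    · intro x hx y hy
      simp only [triangleC, Finset.coe_insert, Finset.coe_singleton, Set.mem_insert_iff,
        Set.mem_singleton_iff] at hx hy
      rcases hx with rfl | rfl | rfl | rfl | rfl | rfl <;>
      rcases hy with rfl | rfl | rfl | rfl | rfl | rfl <;> simp only [F] <;> grind
    · intro x hx
      simp only [triangleC, Finset.mem_insert, Finset.mem_singleton] at hx
      rcases hx with rfl | rfl | rfl | rfl | rfl | rfl <;> simp only [F] <;> tauto
    · intro x hx
      simp only [triangleC, Finset.mem_insert, Finset.mem_singleton] at hx
      rcases hx with rfl | rfl | rfl <;> simp only [F, Finset.image_insert, Finset.image_singleton]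
      · convert he using 1; exact rot3 _ _ _
      · convert hf using 1; exact swp3 _ _ _
      · convert hg using 1; exact swp3 _ _ _

/-- additivity of `choose 2` -/
theorem C2add (p q : ℕ) : (p + q).choose 2 = p.choose 2 + q.choose 2 + p * q := by
  induction q with
  | zero => simp
  | succ q ih =>
    have h1 : (p + (q + 1)).choose 2 = (p + q) + (p + q).choose 2 := by
      rw [← add_assoc, Nat.choose_succ_succ' (p + q) 1]; simp
    have h2 : (q + 1).choose 2 = q + q.choose 2 := by
      rw [Nat.choose_succ_succ' q 1]; simp
    rw [h1, h2, ih]; ring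

/-- families of triples pairwise sharing two vertices -/
theorem two_inter (D : Finset (Finset ℕ)) (V : Finset ℕ) (h3 : ∀ e ∈ D, e.card = 3)
    (hV : ∀ e ∈ D, e ⊆ V) (h2 : ∀ e ∈ D, ∀ g ∈ D, ∀ y, M1 e g y → False)
    (h0 : ∀ e ∈ D, ∀ g ∈ D, ∃ y ∈ e, y ∈ g) :
    D.card ≤ max (V.card - 2) 4 := by
  by_cases hD : D.card ≤ 1
  · exact le_trans hD (by simp)
  obtain ⟨e, he, f, hf, hef⟩ := Finset.one_lt_card.1 (not_le.1 hD)
  have key : ∀ e ∈ D, ∀ g ∈ D, ∃ y z, y ≠ z ∧ y ∈ e ∧ y ∈ g ∧ z ∈ e ∧ z ∈ g := by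
    intro e he g hg
    obtain ⟨y, hy, hy'⟩ := h0 e he g hg
    by_contra hcon
    apply h2 e he g hg y
    refine ⟨hy, hy', fun x hx hx' => ?_⟩
    by_contra hne
    exact hcon ⟨x, y, hne, hx, hx', hy, hy'⟩
  obtain ⟨a, b, hab, ha, ha', hb, hb'⟩ := key e he f hf
  obtain ⟨c, hac, hbc, rfl⟩ := three_of_mem2 (h3 e he) ha hb hab
  obtain ⟨d, had, hbd, rfl⟩ := three_of_mem2 (h3 f hf) ha' hb' hab
  have hcd : c ≠ d := by rintro rfl; exact hef rfl
  by_cases hall : ∀ g ∈ D, a ∈ g ∧ b ∈ g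
  · apply le_trans _ (le_max_left _ _)
    have hsub : D ⊆ ((V.erase a).erase b).image (fun z => ({a, b, z} : Finset ℕ)) := by
      intro g hg
      obtain ⟨h1, h2⟩ := hall g hg
      obtain ⟨z, hz1, hz2, rfl⟩ := three_of_mem2 (h3 g hg) h1 h2 hab
      refine Finset.mem_image.2 ⟨z, ?_, rfl⟩
      have := hV _ hg (show z ∈ _ by simp)
      simp [this, hz1.symm, hz2.symm]
    have haV : a ∈ V := hV _ he ha
    have hbV : b ∈ V := hV _ he hb
    have hc : ((V.erase a).erase b).card = V.card - 2 := by
      rw [Finset.card_erase_of_mem (by simp [hbV, hab.symm]), Finset.card_erase_of_mem haV]; omega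
    calc D.card ≤ _ := Finset.card_le_card hsub
      _ ≤ _ := Finset.card_image_le
      _ = _ := hc
  · apply le_trans _ (le_max_right _ _)
    have hsub : D ⊆ ({a, b, c, d} : Finset ℕ).powersetCard 3 := by
      push Not at hall
      obtain ⟨g, hg, hg'⟩ := hall
      obtain ⟨y1, z1, A1, A2, A3, A4, A5⟩ := key _ he _ hg
      obtain ⟨y2, z2, B1, B2, B3, B4, B5⟩ := key _ hf _ hg
      have hcg : c ∈ g := by
        simp only [Finset.mem_insert, Finset.mem_singleton] at A2 A4; grind
      have hdg : d ∈ g := by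
        simp only [Finset.mem_insert, Finset.mem_singleton] at B2 B4; grind
      obtain ⟨r, hr1, hr2, rfl⟩ := three_of_mem2 (h3 g hg) hcg hdg hcd
      intro h hh
      rw [Finset.mem_powersetCard]
      refine ⟨?_, h3 h hh⟩
      intro x hx
      by_contra hxn
      obtain ⟨s, t, hxs, hxt, hst, rfl⟩ := three_of_mem (h3 h hh) hx
      have hr : r = a ∨ r = b := by
        clear h0 h2 h3 hV key hxn hx hxs hxt hst hh hg' he hf B1 B2 B3 B4 B5
        simp only [Finset.mem_insert, Finset.mem_singleton] at A2 A3 A4 A5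
        grind
      have tw : ∀ e ∈ D, x ∉ e → s ∈ e ∧ t ∈ e := by
        intro e he hxe
        obtain ⟨y1, z1, C1, C2, C3, C4, C5⟩ := key _ he _ hh
        simp only [Finset.mem_insert, Finset.mem_singleton] at C3 C5
        clear h0 h2 h3 hV key hg'
        rcases C3 with rfl | rfl | rfl <;> rcases C5 with rfl | rfl | rfl <;> tauto
      simp only [Finset.mem_insert, Finset.mem_singleton, not_or] at hxn
      obtain ⟨n1, n2, n3, n4⟩ := hxn
      have t1 := tw _ he (by simp [*])
      have t2 := tw _ hf (by simp [*])
      have t3 := tw _ hg (by simp; rcases hr with rfl | rfl <;> simp [*])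
      clear h0 h2 h3 hV key hg' tw
      simp only [Finset.mem_insert, Finset.mem_singleton] at t1 t2 t3
      grind
    calc D.card ≤ _ := Finset.card_le_card hsub
      _ ≤ 4 := by
        rw [Finset.card_powersetCard]
        have : ({a, b, c, d} : Finset ℕ).card ≤ 4 := Finset.card_le_four
        exact le_trans (Nat.choose_le_choose 3 this) (by decide)

theorem count2 (B : Finset (Finset ℕ)) (Y : Finset ℕ) (h2 : ∀ p ∈ B, 2 ≤ (Y ∩ p).card)
    (hd : ∀ y ∈ Y, (B.filter (fun p => y ∈ p)).card ≤ 2) : B.card ≤ Y.card := by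
  have h := Finset.sum_card_inter_le hd
  have h' : B.card * 2 ≤ ∑ t ∈ B, (Y ∩ t).card := by
    rw [← smul_eq_mul]
    exact Finset.card_nsmul_le_sum _ _ _ h2
  omega



theorem crossing {E : Finset (Finset ℕ)} (hG : Good E) {v a b c d : ℕ}
    (hd : List.Pairwise (· ≠ ·) [v, a, b, c, d])
    (h1 : ({v, a, b} : Finset ℕ) ∈ E) (h2 : ({v, c, d} : Finset ℕ) ∈ E)
    {e f : Finset ℕ} (he : e ∈ E)
    (heU : ∀ x ∈ e, x ∉ ({v, a, b, c, d} : Finset ℕ)) {w : ℕ} (hw : w ∈ e) (hf : f ∈ E)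
    (hwf : w ∈ f) {u : ℕ} (hu : u ∈ f) (huU : u ∈ ({v, a, b, c, d} : Finset ℕ)) :
    f = {a, b, w} ∨ f = {c, d, w} ∨ ∃ w' ∈ e, w' ≠ w ∧ f = {v, w, w'} := by
  simp only [List.pairwise_cons, List.mem_cons, forall_eq_or_imp, List.not_mem_nil] at hd
  obtain ⟨⟨va, vb, vc, vd, -⟩, ⟨ab, ac, ad, -⟩, ⟨bc, bd, -⟩, ⟨cd, -⟩, -⟩ := hd
  simp only [Finset.mem_insert, Finset.mem_singleton, not_or] at heU huU
  have hw' := heU w hw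
  have huw : u ≠ w := by rintro rfl; tauto
  by_cases hA : ∃ w' ∈ e, w' ∈ f ∧ w' ≠ w
  · obtain ⟨w', hw'e, hw'f, hne⟩ := hA
    have h' := heU w' hw'e
    obtain ⟨x, hx1, hx2, rfl⟩ := three_of_mem2 (hG.1 f hf) hwf hw'f hne.symm
    have : u = x := by
      simp only [Finset.mem_insert, Finset.mem_singleton] at hu
      rcases hu with rfl | rfl | rfl <;> tauto
    subst this
    rcases huU with rfl | rfl | rfl | rfl | rfl
    · exact Or.inr (Or.inr ⟨w', hw'e, hne, rot3 _ _ _⟩)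
    · exfalso
      refine hG.2.1 _ hf _ h1 _ h2 u v ?_ ?_ ?_ <;> simp [M1] <;> clear heU <;> grind
    · exfalso
      refine hG.2.1 _ hf _ h1 _ h2 u v ?_ ?_ ?_ <;> simp [M1] <;> clear heU <;> grind
    · exfalso
      refine hG.2.1 _ hf _ h2 _ h1 u v ?_ ?_ ?_ <;> simp [M1] <;> clear heU <;> grind
    · exfalso
      refine hG.2.1 _ hf _ h2 _ h1 u v ?_ ?_ ?_ <;> simp [M1] <;> clear heU <;> grind
  · have hfe : M1 f e w := ⟨hwf, hw, fun x hx hx' => by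
      by_contra hne
      exact hA ⟨x, hx', hx, hne⟩⟩
    have k1 : ∀ p, M1 {v, a, b} f p → False := fun p hp =>
      hG.2.1 _ h1 _ hf _ he p w hp hfe (by
        intro x hx hx'; have := heU x hx'
        simp only [Finset.mem_insert, Finset.mem_singleton] at hx; tauto)
    have k2 : ∀ p, M1 {v, c, d} f p → False := fun p hp =>
      hG.2.1 _ h2 _ hf _ he p w hp hfe (by
        intro x hx hx'; have := heU x hx'
        simp only [Finset.mem_insert, Finset.mem_singleton] at hx; tauto)
    obtain ⟨x, hx1, hx2, rfl⟩ := three_of_mem2 (hG.1 f hf) hwf hu huw.symm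
    have l1 := k1 v
    have l2 := k1 a
    have l3 := k1 b
    have l4 := k2 v
    have l5 := k2 c
    have l6 := k2 d
    clear k1 k2 hfe hA heU
    simp only [M1, Finset.mem_insert, Finset.mem_singleton, forall_eq_or_imp, forall_eq] at l1 l2 l3 l4 l5 l6
    have : (u = a ∧ x = b) ∨ (u = b ∧ x = a) ∨ (u = c ∧ x = d) ∨ (u = d ∧ x = c) := by
      rcases huU with rfl | rfl | rfl | rfl | rfl <;> grind
    rcases this with ⟨rfl, rfl⟩ | ⟨rfl, rfl⟩ | ⟨rfl, rfl⟩ | ⟨rfl, rfl⟩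
    · left; rw [rot3, rot3]
    · left; rw [rot3 w u x, swp3 x w u]
    · right; left; rw [rot3, rot3]
    · right; left; rw [rot3 w u x, swp3 x w u]


theorem C2val (p : ℕ) : (p + 1).choose 2 = p.choose 2 + p := by
  rw [C2add]; simp

theorem C2lb (k : ℕ) : 2 * k ≤ k.choose 2 + 3 := by
  induction k with
  | zero => simp
  | succ k ih =>
    rw [C2val]
    rcases k with _ | _ | k
    · simp
    · simp
    · omega

theorem C2mul (p : ℕ) : 2 * (p + 1).choose 2 = (p + 1) * p := by
  induction p with
  | zero => simp
  | succ p ih => rw [C2val, mul_add, ih]; ring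

theorem gbA (E : Finset (Finset ℕ)) (V : Finset ℕ) (h3 : ∀ e ∈ E, e.card = 3)
    (hV : ∀ e ∈ E, e ⊆ V) (hN : 6 ≤ V.card)
    (h : ∀ e ∈ E, ∀ g ∈ E, ∀ y, M1 e g y → False) : E.card ≤ (V.card - 1).choose 2 := by
  have hdeg : ∀ x ∈ V, (E.filter (fun e => x ∈ e)).card ≤ V.card - 2 := by
    intro x hx
    have := two_inter (E.filter (fun e => x ∈ e)) V
      (fun e he => h3 e (Finset.mem_filter.1 he).1)
      (fun e he => hV e (Finset.mem_filter.1 he).1)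
      (fun e he g hg => h e (Finset.mem_filter.1 he).1 g (Finset.mem_filter.1 hg).1)
      (fun e he g hg => ⟨x, (Finset.mem_filter.1 he).2, (Finset.mem_filter.1 hg).2⟩)
    omega
  have hs := Finset.sum_card_inter_le hdeg
  have hs' : E.card * 3 ≤ ∑ t ∈ E, (V ∩ t).card := by
    rw [← smul_eq_mul]
    refine Finset.card_nsmul_le_sum _ _ _ (fun e he => ?_)
    rw [Finset.inter_eq_right.2 (hV e he), h3 e he]
  obtain ⟨p, hp⟩ : ∃ p, V.card = p + 6 := ⟨V.card - 6, by omega⟩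
  rw [hp] at hs ⊢
  have := C2mul (p + 4)
  have e1 : p + 6 - 2 = p + 4 := by omega
  have e2 : p + 6 - 1 = p + 4 + 1 := by omega
  rw [e1] at hs
  rw [e2]
  nlinarith

/-- number of crossing edges containing the centre. -/
theorem cross3 {E : Finset (Finset ℕ)} (hG : Good E) {v a b c d : ℕ}
    (hd : List.Pairwise (· ≠ ·) [v, a, b, c, d])
    (h1 : ({v, a, b} : Finset ℕ) ∈ E) (h2 : ({v, c, d} : Finset ℕ) ∈ E) (Y : Finset ℕ)
    (hY : ∀ y ∈ Y, ∃ e ∈ E, y ∈ e ∧ ∀ x ∈ e, x ∉ ({v, a, b, c, d} : Finset ℕ))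
    (hY' : ∀ e ∈ E, (∀ x ∈ e, x ∉ ({v, a, b, c, d} : Finset ℕ)) → e ⊆ Y) :
    (E.filter (fun f => v ∈ f ∧ ∃ w ∈ f, w ∈ Y)).card ≤ Y.card := by
  have hv1 : ∀ w, ∀ y ∈ Y, v ∈ ({a, b, w} : Finset ℕ) → v = w := by
    intro w y hy
    simp at hd ⊢; tauto
  have hv2 : ∀ w, ∀ y ∈ Y, v ∈ ({c, d, w} : Finset ℕ) → v = w := by
    intro w y hy
    simp at hd ⊢; tauto
  have main : ∀ f ∈ E, v ∈ f → ∀ w ∈ f, ∀ e ∈ E, w ∈ e →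
      (∀ x ∈ e, x ∉ ({v, a, b, c, d} : Finset ℕ)) → w ∈ Y → 
      ∃ w' ∈ e, w' ≠ w ∧ f = {v, w, w'} := by
    intro f hf hvf w hw e he hwe heU hwY
    have hvw : v ≠ w := by
      rintro rfl
      exact heU v hwe (by simp)
    rcases crossing hG hd h1 h2 he heU hwe hf hw hvf (by simp) with h | h | h
    · rw [h] at hvf; exact absurd (hv1 w w hwY hvf) hvw
    · rw [h] at hvf; exact absurd (hv2 w w hwY hvf) hvw
    · exact h
  apply count2
  · intro f hf
    obtain ⟨hf, hvf, w, hw, hwY⟩ := Finset.mem_filter.1 hf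
    obtain ⟨e, he, hwe, heU⟩ := hY w hwY
    obtain ⟨w', hw'e, hne, hfe⟩ := main f hf hvf w hw e he hwe heU hwY
    have : ({w, w'} : Finset ℕ) ⊆ Y ∩ f := by
      rw [hfe]; simp [Finset.insert_subset_iff, hwY, hY' e he heU hw'e]
    calc 2 = ({w, w'} : Finset ℕ).card := (Finset.card_pair hne.symm).symm
      _ ≤ _ := Finset.card_le_card this
  · intro y hy
    obtain ⟨e, he, hye, heU⟩ := hY y hy
    obtain ⟨s, t, -, -, -, hst⟩ := three_of_mem (hG.1 e he) hye
    have : (Finset.filter (fun p => y ∈ p) (E.filter (fun f => v ∈ f ∧ ∃ w ∈ f, w ∈ Y))) ⊆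
        ({{v, y, s}, {v, y, t}} : Finset (Finset ℕ)) := by
      intro f hf
      obtain ⟨hf, hyf⟩ := Finset.mem_filter.1 hf
      obtain ⟨hf, hvf, -⟩ := Finset.mem_filter.1 hf
      obtain ⟨w', hw'e, hne, hfe⟩ := main f hf hvf y hyf e he hye heU hy
      rw [hst] at hw'e
      simp only [Finset.mem_insert, Finset.mem_singleton] at hw'e ⊢
      rcases hw'e with h | h | h
      · exact absurd h hne
      · left; rw [hfe, h]
      · right; rw [hfe, h]
    exact le_trans (Finset.card_le_card this) Finset.card_le_two


theorem partlem {E : Finset (Finset ℕ)} (hG : Good E) {v a b c d : ℕ}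
    (hd : List.Pairwise (· ≠ ·) [v, a, b, c, d])
    (h1 : ({v, a, b} : Finset ℕ) ∈ E) (X : Finset ℕ)
    (hX : ∀ x ∈ X, x ∉ ({v, a, b, c, d} : Finset ℕ)) (hX1 : 1 ≤ X.card) :
    (E.filter (fun f => f = {a, c, d} ∨ f = {b, c, d} ∨
      ∃ y ∈ X, f = {v, c, y} ∨ f = {v, d, y})).card ≤ 2 * X.card := by
  simp only [List.pairwise_cons, List.mem_cons, forall_eq_or_imp, List.not_mem_nil] at hd
  obtain ⟨⟨va, vb, vc, vd, -⟩, ⟨ab, ac, ad, -⟩, ⟨bc, bd, -⟩, ⟨cd, -⟩, -⟩ := hd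
  simp only [Finset.mem_insert, Finset.mem_singleton, not_or] at hX
  by_cases h : ({a, c, d} : Finset ℕ) ∈ E ∨ ({b, c, d} : Finset ℕ) ∈ E
  · have hno : ∀ y ∈ X, ({v, c, y} : Finset ℕ) ∉ E ∧ ({v, d, y} : Finset ℕ) ∉ E := by
      intro y hy
      have hy' := hX y hy
      clear hX
      constructor
      · intro hc
        rcases h with h | h
        · refine hG.2.2 _ h1 _ h _ hc a c v ?_ ?_ ?_ ?_ <;> simp [M1] <;> grind
        · refine hG.2.2 _ h1 _ h _ hc b c v ?_ ?_ ?_ ?_ <;> simp [M1] <;> grind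
      · intro hc
        rcases h with h | h
        · refine hG.2.2 _ h1 _ h _ hc a d v ?_ ?_ ?_ ?_ <;> simp [M1] <;> grind
        · refine hG.2.2 _ h1 _ h _ hc b d v ?_ ?_ ?_ ?_ <;> simp [M1] <;> grind
    refine le_trans (Finset.card_le_card (t := {{a, c, d}, {b, c, d}}) ?_)
      (le_trans Finset.card_le_two (by omega))
    intro f hf
    obtain ⟨hf, h' | h' | ⟨y, hy, h' | h'⟩⟩ := Finset.mem_filter.1 hf
    · simp [h']
    · simp [h']
    · rw [h'] at hf; exact absurd hf (hno y hy).1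
    · rw [h'] at hf; exact absurd hf (hno y hy).2
  · refine le_trans (Finset.card_le_card (t := X.image (fun y => ({v, c, y} : Finset ℕ)) ∪
      X.image (fun y => ({v, d, y} : Finset ℕ))) ?_) (le_trans (Finset.card_union_le _ _) ?_)
    · intro f hf
      obtain ⟨hf, h' | h' | ⟨y, hy, h' | h'⟩⟩ := Finset.mem_filter.1 hf
      · rw [h'] at hf; exact absurd (Or.inl hf) h
      · rw [h'] at hf; exact absurd (Or.inr hf) h
      · exact Finset.mem_union_left _ (Finset.mem_image.2 ⟨y, hy, h'.symm⟩)
      · exact Finset.mem_union_right _ (Finset.mem_image.2 ⟨y, hy, h'.symm⟩)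
    · have i1 : (X.image (fun y => ({v, c, y} : Finset ℕ))).card ≤ X.card := Finset.card_image_le
      have i2 : (X.image (fun y => ({v, d, y} : Finset ℕ))).card ≤ X.card := Finset.card_image_le
      omega

/-- structure of edges avoiding the centre when nothing is disjoint from `U`. -/
theorem novlem {E : Finset (Finset ℕ)} (hG : Good E) {v a b c d : ℕ}
    (hd : List.Pairwise (· ≠ ·) [v, a, b, c, d])
    (h1 : ({v, a, b} : Finset ℕ) ∈ E) (h2 : ({v, c, d} : Finset ℕ) ∈ E)
    {f : Finset ℕ} (hf : f ∈ E) (hvf : v ∉ f) {x u : ℕ} (hx : x ∈ f)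
    (hxU : x ∉ ({v, a, b, c, d} : Finset ℕ)) (hu : u ∈ f)
    (huU : u ∈ ({v, a, b, c, d} : Finset ℕ)) : f = {a, b, x} ∨ f = {c, d, x} := by
  simp only [List.pairwise_cons, List.mem_cons, forall_eq_or_imp, List.not_mem_nil] at hd
  obtain ⟨⟨va, vb, vc, vd, -⟩, ⟨ab, ac, ad, -⟩, ⟨bc, bd, -⟩, ⟨cd, -⟩, -⟩ := hd
  simp only [Finset.mem_insert, Finset.mem_singleton, not_or] at hxU huU
  have hxu : u ≠ x := by rintro rfl; tauto
  have huv : u ≠ v := by rintro rfl; tauto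
  obtain ⟨y, hy1, hy2, rfl⟩ := three_of_mem2 (hG.1 f hf) hu hx hxu
  have hyv : y ≠ v := by rintro rfl; simp at hvf
  have key1 : ∀ p, p = a ∨ p = b → M1 {u, x, y} {v, a, b} p → c ∉ ({u, x, y} : Finset ℕ) →
      d ∉ ({u, x, y} : Finset ℕ) → False := by
    intro p hp hm hc hd
    refine hG.2.1 _ hf _ h1 _ h2 p v hm ?_ ?_ 
    · simp [M1]; grind
    · intro z hz hz'
      simp only [Finset.mem_insert, Finset.mem_singleton] at hz'
      rcases hz' with rfl | rfl | rfl <;> tauto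
  have key2 : ∀ p, p = c ∨ p = d → M1 {u, x, y} {v, c, d} p → a ∉ ({u, x, y} : Finset ℕ) →
      b ∉ ({u, x, y} : Finset ℕ) → False := by
    intro p hp hm hc hd
    refine hG.2.1 _ hf _ h2 _ h1 p v hm ?_ ?_ 
    · simp [M1]; grind
    · intro z hz hz'
      simp only [Finset.mem_insert, Finset.mem_singleton] at hz'
      rcases hz' with rfl | rfl | rfl <;> tauto
  have key3 : ∀ p q, (p = a ∨ p = b) → (q = c ∨ q = d) → M1 {u, x, y} {v, a, b} p →
      M1 {v, c, d} {u, x, y} q → False := by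
    intro p q hp hq hm hm'
    refine hG.2.2 _ hf _ h1 _ h2 p v q hm ?_ hm' ?_
    · simp [M1]; grind
    · simp; grind
  have l1 := key1 a (by simp)
  have l2 := key1 b (by simp)
  have l3 := key2 c (by simp)
  have l4 := key2 d (by simp)
  have l5 := key3 a c (by simp) (by simp)
  have l6 := key3 a d (by simp) (by simp)
  have l7 := key3 b c (by simp) (by simp)
  have l8 := key3 b d (by simp) (by simp)
  clear key1 key2 key3
  simp only [M1, Finset.mem_insert, Finset.mem_singleton, forall_eq_or_imp, forall_eq]
    at l1 l2 l3 l4 l5 l6 l7 l8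
  have : (u = a ∧ y = b) ∨ (u = b ∧ y = a) ∨ (u = c ∧ y = d) ∨ (u = d ∧ y = c) := by
    clear h1 h2 hf hG hvf hx hu
    rcases huU with rfl | rfl | rfl | rfl | rfl <;> grind
  rcases this with ⟨rfl, rfl⟩ | ⟨rfl, rfl⟩ | ⟨rfl, rfl⟩ | ⟨rfl, rfl⟩
  · left; rw [swp3]
  · left; rw [rot3]
  · right; rw [swp3]
  · right; rw [rot3]


set_option maxHeartbeats 2000000 in
theorem gbC {E : Finset (Finset ℕ)} (hG : Good E) {v a b c d : ℕ}
    (hd : List.Pairwise (· ≠ ·) [v, a, b, c, d])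
    (h1 : ({v, a, b} : Finset ℕ) ∈ E) (h2 : ({v, c, d} : Finset ℕ) ∈ E) (X : Finset ℕ)
    (hX : ∀ x ∈ X, x ∉ ({v, a, b, c, d} : Finset ℕ)) (hX1 : 1 ≤ X.card)
    (hV : ∀ f ∈ E, ∀ x ∈ f, x ∈ ({v, a, b, c, d} : Finset ℕ) ∨ x ∈ X)
    (hU : ∀ f ∈ E, ∃ u ∈ f, u ∈ ({v, a, b, c, d} : Finset ℕ)) :
    E.card ≤ (X.card + 4).choose 2 + 3 := by
  have hd' := hd
  have hd2 : List.Pairwise (· ≠ ·) [v, c, d, a, b] := by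
    simp at hd ⊢; grind
  have hX2 : ∀ x ∈ X, x ∉ ({v, c, d, a, b} : Finset ℕ) := by
    intro x hx; have := hX x hx; simp at this ⊢; tauto
  have p1 := partlem hG hd h1 X hX hX1
  have p2 := partlem hG hd2 h2 X hX2 hX1
  simp only [List.pairwise_cons, List.mem_cons, forall_eq_or_imp, List.not_mem_nil] at hd'
  obtain ⟨⟨va, vb, vc, vd, -⟩, ⟨ab, ac, ad, -⟩, ⟨bc, bd, -⟩, ⟨cd, -⟩, -⟩ := hd'
  set Z := X.filter (fun z => ({a, b, z} : Finset ℕ) ∈ E ∨ ({c, d, z} : Finset ℕ) ∈ E) with hZ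
  have hZX : Z ⊆ X := Finset.filter_subset _ _
  set S6 := (({a, b, c, d} : Finset ℕ).powersetCard 2).image (insert v)
  set S1 := (E.filter (fun f => f = {a, c, d} ∨ f = {b, c, d} ∨
      ∃ y ∈ X, f = {v, c, y} ∨ f = {v, d, y}))
  set S2 := (E.filter (fun f => f = {c, a, b} ∨ f = {d, a, b} ∨
      ∃ y ∈ X, f = {v, a, y} ∨ f = {v, b, y}))
  set S3 := ((X \ Z).powersetCard 2).image (insert v)
  set S4 := Z.image (fun z => ({a, b, z} : Finset ℕ))
  set S5 := Z.image (fun z => ({c, d, z} : Finset ℕ))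
  have c6 : S6.card ≤ 6 := by
    refine le_trans Finset.card_image_le ?_
    rw [Finset.card_powersetCard]
    have : ({a, b, c, d} : Finset ℕ).card ≤ 4 := Finset.card_le_four
    exact le_trans (Nat.choose_le_choose 2 this) (by decide)
  have c3 : S3.card ≤ (X.card - Z.card).choose 2 := by
    refine le_trans Finset.card_image_le ?_
    rw [Finset.card_powersetCard, Finset.card_sdiff_of_subset hZX]
  have c4 : S4.card ≤ Z.card := Finset.card_image_le
  have c5 : S5.card ≤ Z.card := Finset.card_image_le
  have hsub : E ⊆ S6 ∪ S1 ∪ S2 ∪ S3 ∪ S4 ∪ S5 := by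
    intro f hf
    have hf3 := hG.1 f hf
    simp only [Finset.mem_union]
    by_cases hfU : ∃ x ∈ f, x ∉ ({v, a, b, c, d} : Finset ℕ)
    · obtain ⟨x, hx, hxU⟩ := hfU
      have hxX : x ∈ X := (hV f hf x hx).resolve_left hxU
      obtain ⟨u, hu, huU⟩ := hU f hf
      by_cases hvf : v ∈ f
      · have hvx : v ≠ x := by rintro rfl; simp at hxU
        obtain ⟨y, hy1, hy2, rfl⟩ := three_of_mem2 hf3 hvf hx hvx
        rcases hV _ hf y (by simp) with hy | hy
        · simp only [Finset.mem_insert, Finset.mem_singleton] at hy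
          rcases hy with hy | hy | hy | hy | hy
          · exact absurd hy.symm hy1
          · refine Or.inl (Or.inl (Or.inl (Or.inr (Finset.mem_filter.2 ⟨hf, Or.inr (Or.inr
              ⟨x, hxX, Or.inl ?_⟩)⟩))))
            rw [hy, swp3]
          · refine Or.inl (Or.inl (Or.inl (Or.inr (Finset.mem_filter.2 ⟨hf, Or.inr (Or.inr
              ⟨x, hxX, Or.inr ?_⟩)⟩))))
            rw [hy, swp3]
          · refine Or.inl (Or.inl (Or.inl (Or.inl (Or.inr (Finset.mem_filter.2 ⟨hf, Or.inr (Or.inr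
              ⟨x, hxX, Or.inl ?_⟩)⟩)))))
            rw [hy, swp3]
          · refine Or.inl (Or.inl (Or.inl (Or.inl (Or.inr (Finset.mem_filter.2 ⟨hf, Or.inr (Or.inr
              ⟨x, hxX, Or.inr ?_⟩)⟩)))))
            rw [hy, swp3]
        · -- both in X
          have nz : ∀ x y, x ∈ X → y ∈ X → v ≠ x → v ≠ y → x ≠ y →
              ({v, x, y} : Finset ℕ) ∈ E → x ∉ Z := by
            intro x y hx hy hvx hvy hxy hf hxZ
            have q1 := hX x hx
            have q2 := hX y hy
            simp only [Finset.mem_insert, Finset.mem_singleton, not_or] at q1 q2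
            obtain ⟨-, h | h⟩ := Finset.mem_filter.1 hxZ
            · refine hG.2.1 _ h _ hf _ h2 x v ?_ ?_ ?_ <;> simp [M1] <;> clear hX hX2 hV hU <;>
                grind
            · refine hG.2.1 _ h _ hf _ h1 x v ?_ ?_ ?_ <;> simp [M1] <;> clear hX hX2 hV hU <;>
                grind
          have n1 := nz x y hxX hy hvx hy1 hy2 hf
          have n2 := nz y x hy hxX hy1 hvx hy2.symm (by rw [swp3]; exact hf)
          refine Or.inl (Or.inl (Or.inr (Finset.mem_image.2 ⟨{x, y}, ?_, rfl⟩)))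
          rw [Finset.mem_powersetCard]
          refine ⟨?_, Finset.card_pair hy2⟩
          simp [Finset.insert_subset_iff, hxX, hy, n1, n2]
      · rcases novlem hG hd h1 h2 hf hvf hx hxU hu huU with h | h
        · refine Or.inl (Or.inr (Finset.mem_image.2 ⟨x, ?_, h.symm⟩))
          refine Finset.mem_filter.2 ⟨hxX, Or.inl (h ▸ hf)⟩
        · refine Or.inr (Finset.mem_image.2 ⟨x, ?_, h.symm⟩)
          refine Finset.mem_filter.2 ⟨hxX, Or.inr (h ▸ hf)⟩
    · push Not at hfU
      by_cases hvf : v ∈ f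
      · refine Or.inl (Or.inl (Or.inl (Or.inl (Or.inl (Finset.mem_image.2 ⟨f.erase v, ?_,
          Finset.insert_erase hvf⟩)))))
        rw [Finset.mem_powersetCard, Finset.card_erase_of_mem hvf, hf3]
        refine ⟨?_, rfl⟩
        intro x hx
        have := hfU x (Finset.mem_of_mem_erase hx)
        have := Finset.ne_of_mem_erase hx
        simp_all
      · obtain ⟨x, y, z, hxy, hxz, hyz, rfl⟩ := Finset.card_eq_three.1 hf3
        have m1 := hfU x (by simp)
        have m2 := hfU y (by simp)
        have m3 := hfU z (by simp)
        simp only [Finset.mem_insert, Finset.mem_singleton, not_or] at m1 m2 m3 hvf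
        have : ({x, y, z} : Finset ℕ) = {a, c, d} ∨ ({x, y, z} : Finset ℕ) = {b, c, d} ∨
            ({x, y, z} : Finset ℕ) = {c, a, b} ∨ ({x, y, z} : Finset ℕ) = {d, a, b} := by
          have hsb : ({x, y, z} : Finset ℕ) ∈ ({a, b, c, d} : Finset ℕ).powersetCard 3 := by
            rw [Finset.mem_powersetCard]
            refine ⟨?_, hf3⟩
            simp only [Finset.insert_subset_iff, Finset.singleton_subset_iff, Finset.mem_insert,
              Finset.mem_singleton]
            exact ⟨m1.resolve_left (Ne.symm hvf.1), m2.resolve_left (Ne.symm hvf.2.1),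
              m3.resolve_left (Ne.symm hvf.2.2)⟩
          have hco : ({a, b, c, d} : Finset ℕ).card = 4 := by
            simp [*]
          obtain ⟨hs, hc⟩ := Finset.mem_powersetCard.1 hsb
          obtain ⟨r, hr⟩ : ∃ r, r ∈ ({a, b, c, d} : Finset ℕ) \ {x, y, z} := by
            apply Finset.card_pos.1
            rw [Finset.card_sdiff_of_subset hs]; omega
          have heq : ({x, y, z} : Finset ℕ) = ({a, b, c, d} : Finset ℕ).erase r := by
            apply Finset.eq_of_subset_of_card_le
            · intro t ht
              rw [Finset.mem_erase]
              refine ⟨?_, hs ht⟩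
              rintro rfl
              exact (Finset.mem_sdiff.1 hr).2 ht
            · rw [Finset.card_erase_of_mem (Finset.mem_sdiff.1 hr).1]; omega
          have hr' := (Finset.mem_sdiff.1 hr).1
          rw [heq]
          clear hfU hX hX2 hV hU heq hs hsb hr
          simp only [Finset.mem_insert, Finset.mem_singleton] at hr'
          rcases hr' with rfl | rfl | rfl | rfl
          · right; left; ext t; simp; grind
          · left; ext t; simp; grind
          · right; right; right; ext t; simp; grind
          · right; right; left; ext t; simp; grind
        rcases this with h | h | h | h
        · exact Or.inl (Or.inl (Or.inl (Or.inl (Or.inr (Finset.mem_filter.2 ⟨hf, Or.inl h⟩)))))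
        · exact Or.inl (Or.inl (Or.inl (Or.inl (Or.inr (Finset.mem_filter.2
            ⟨hf, Or.inr (Or.inl h)⟩)))))
        · exact Or.inl (Or.inl (Or.inl (Or.inr (Finset.mem_filter.2 ⟨hf, Or.inl h⟩))))
        · exact Or.inl (Or.inl (Or.inl (Or.inr (Finset.mem_filter.2 ⟨hf, Or.inr (Or.inl h)⟩))))
  have hc := Finset.card_le_card hsub
  have u1 := Finset.card_union_le (S6 ∪ S1 ∪ S2 ∪ S3 ∪ S4) S5
  have u2 := Finset.card_union_le (S6 ∪ S1 ∪ S2 ∪ S3) S4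
  have u3 := Finset.card_union_le (S6 ∪ S1 ∪ S2) S3
  have u4 := Finset.card_union_le (S6 ∪ S1) S2
  have u5 := Finset.card_union_le S6 S1
  have hk : Z.card ≤ X.card := Finset.card_le_card hZX
  obtain ⟨s, hs⟩ : ∃ s, X.card = s + Z.card := ⟨X.card - Z.card, by omega⟩
  have e1 := C2add X.card 4
  have e2 := C2add s Z.card
  have e3 := C2lb Z.card
  have e4 : X.card - Z.card = s := by omega
  have e5 : (4 : ℕ).choose 2 = 6 := by decide
  rw [e4] at c3
  rw [← hs] at e2
  rw [e1, e2, e5]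
  have := Nat.zero_le (s * Z.card)
  omega

set_option maxHeartbeats 1000000 in
theorem gb : ∀ N : ℕ, ∀ (E : Finset (Finset ℕ)) (V : Finset ℕ), Good E → (∀ e ∈ E, e ⊆ V) →
    V.card = N → 1 ≤ N → E.card ≤ (N - 1).choose 2 + 4 ∧
      (6 ≤ N → E.card ≤ (N - 1).choose 2 + 3) := by
  intro N
  induction N using Nat.strong_induction_on with
  | _ N ih =>
  intro E V hG hV hN hN1
  by_cases h6 : N ≤ 5
  · refine ⟨?_, fun h => absurd h (by omega)⟩
    have hs : E ⊆ V.powersetCard 3 := fun e he => Finset.mem_powersetCard.2 ⟨hV e he, hG.1 e he⟩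
    have := Finset.card_le_card hs
    rw [Finset.card_powersetCard, hN] at this
    refine le_trans this ?_
    interval_cases N <;> decide
  suffices h : E.card ≤ (N - 1).choose 2 + 3 from ⟨by omega, fun _ => h⟩
  by_cases hM : ∀ e ∈ E, ∀ g ∈ E, ∀ y, M1 e g y → False
  · have := gbA E V hG.1 hV (by omega) hM
    rw [hN] at this; omega
  push Not at hM
  obtain ⟨e1, he1, e2, he2, v, hm, -⟩ := hM
  obtain ⟨a, b, va, vb, ab, rfl⟩ := three_of_mem (hG.1 e1 he1) hm.1
  obtain ⟨c, d, vc, vd, cd, rfl⟩ := three_of_mem (hG.1 e2 he2) hm.2.1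
  have hd : List.Pairwise (· ≠ ·) [v, a, b, c, d] := by
    obtain ⟨-, -, hm⟩ := hm
    simp only [Finset.mem_insert, Finset.mem_singleton, forall_eq_or_imp, forall_eq] at hm
    simp only [List.pairwise_cons, List.mem_cons, forall_eq_or_imp, List.not_mem_nil]
    simp
    grind
  have hUV : ({v, a, b, c, d} : Finset ℕ) ⊆ V := by
    have i1 := hV _ he1
    have i2 := hV _ he2
    simp only [Finset.insert_subset_iff, Finset.singleton_subset_iff] at i1 i2 ⊢
    tauto
  have hUc : ({v, a, b, c, d} : Finset ℕ).card = 5 := by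
    simp at hd
    rw [Finset.card_insert_of_notMem (by simp; tauto), Finset.card_insert_of_notMem (by simp; tauto),
      Finset.card_insert_of_notMem (by simp; tauto), Finset.card_pair (by tauto)]
  by_cases hU : ∀ f ∈ E, ∃ u ∈ f, u ∈ ({v, a, b, c, d} : Finset ℕ)
  · have hXc : (V \ {v, a, b, c, d}).card = N - 5 := by
      rw [Finset.card_sdiff_of_subset hUV, hN, hUc]
    have := gbC hG hd he1 he2 (V \ {v, a, b, c, d}) (fun x hx => (Finset.mem_sdiff.1 hx).2)
      (by omega) (fun f hf x hx => by
        by_cases h : x ∈ ({v, a, b, c, d} : Finset ℕ)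
        · exact Or.inl h
        · exact Or.inr (Finset.mem_sdiff.2 ⟨hV f hf hx, h⟩)) hU
    rw [hXc] at this
    have e : N - 5 + 4 = N - 1 := by omega
    rwa [e] at this
  · push Not at hU
    obtain ⟨g, hg, hgU⟩ := hU
    set Y := V.filter (fun y => ∃ e ∈ E, y ∈ e ∧ ∀ x ∈ e, x ∉ ({v, a, b, c, d} : Finset ℕ)) with hY
    have hY1 : ∀ y ∈ Y, ∃ e ∈ E, y ∈ e ∧ ∀ x ∈ e, x ∉ ({v, a, b, c, d} : Finset ℕ) :=
      fun y hy => (Finset.mem_filter.1 hy).2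
    have hY2 : ∀ e ∈ E, (∀ x ∈ e, x ∉ ({v, a, b, c, d} : Finset ℕ)) → e ⊆ Y :=
      fun e he h x hx => Finset.mem_filter.2 ⟨hV e he hx, e, he, hx, h⟩
    have c3 := cross3 hG hd he1 he2 Y hY1 hY2
    have hYU : ∀ y ∈ Y, y ∉ ({v, a, b, c, d} : Finset ℕ) := by
      intro y hy
      obtain ⟨e, he, hye, heU⟩ := hY1 y hy
      exact heU y hye
    have hYV : Y ⊆ V := Finset.filter_subset _ _
    have hk3 : 3 ≤ Y.card := by
      rw [← hG.1 g hg]; exact Finset.card_le_card (hY2 g hg hgU)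
    have hk5 : Y.card + 5 ≤ N := by
      rw [← hUc, ← hN, ← Finset.card_union_of_disjoint]
      · exact Finset.card_le_card (Finset.union_subset hYV hUV)
      · exact Finset.disjoint_left.2 hYU
    have hsub : E ⊆ E.filter (fun f => f ⊆ Y) ∪ E.filter (fun f => f ⊆ V \ Y) ∪
        E.filter (fun f => v ∈ f ∧ ∃ w ∈ f, w ∈ Y) ∪
        Y.image (fun w => ({a, b, w} : Finset ℕ)) ∪ Y.image (fun w => ({c, d, w} : Finset ℕ)) := by
      intro f hf
      simp only [Finset.mem_union, Finset.mem_filter]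
      by_cases i1 : ∃ w ∈ f, w ∈ Y
      · by_cases i2 : ∀ x ∈ f, x ∉ ({v, a, b, c, d} : Finset ℕ)
        · exact Or.inl (Or.inl (Or.inl (Or.inl ⟨hf, hY2 f hf i2⟩)))
        · push Not at i2
          obtain ⟨u, hu, huU⟩ := i2
          obtain ⟨w, hw, hwY⟩ := i1
          obtain ⟨e, he, hwe, heU⟩ := hY1 w hwY
          rcases crossing hG hd he1 he2 he heU hwe hf hw hu huU with h | h | h
          · exact Or.inl (Or.inr (Finset.mem_image.2 ⟨w, hwY, h.symm⟩))
          · exact Or.inr (Finset.mem_image.2 ⟨w, hwY, h.symm⟩)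
          · obtain ⟨w', -, -, h⟩ := h
            exact Or.inl (Or.inl (Or.inr ⟨hf, by rw [h]; simp, w, hw, hwY⟩))
      · push Not at i1
        exact Or.inl (Or.inl (Or.inl (Or.inr ⟨hf, fun x hx => Finset.mem_sdiff.2
          ⟨hV f hf hx, i1 x hx⟩⟩)))
    have hc := Finset.card_le_card hsub
    have g1 := (ih Y.card (by omega) (E.filter (fun f => f ⊆ Y)) Y
      (hG.mono (Finset.filter_subset _ _)) (fun e he => (Finset.mem_filter.1 he).2) rfl
      (by omega)).1
    have g2 := (ih (N - Y.card) (by omega) (E.filter (fun f => f ⊆ V \ Y)) (V \ Y)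
      (hG.mono (Finset.filter_subset _ _)) (fun e he => (Finset.mem_filter.1 he).2)
      (by rw [Finset.card_sdiff_of_subset hYV, hN]) (by omega)).1
    have c4 : (Y.image (fun w => ({a, b, w} : Finset ℕ))).card ≤ Y.card := Finset.card_image_le
    have c5 : (Y.image (fun w => ({c, d, w} : Finset ℕ))).card ≤ Y.card := Finset.card_image_le
    have u1 := Finset.card_union_le (E.filter (fun f => f ⊆ Y) ∪ E.filter (fun f => f ⊆ V \ Y) ∪
        E.filter (fun f => v ∈ f ∧ ∃ w ∈ f, w ∈ Y) ∪
        Y.image (fun w => ({a, b, w} : Finset ℕ))) (Y.image (fun w => ({c, d, w} : Finset ℕ)))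
    have u2 := Finset.card_union_le (E.filter (fun f => f ⊆ Y) ∪ E.filter (fun f => f ⊆ V \ Y) ∪
        E.filter (fun f => v ∈ f ∧ ∃ w ∈ f, w ∈ Y))
        (Y.image (fun w => ({a, b, w} : Finset ℕ)))
    have u3 := Finset.card_union_le (E.filter (fun f => f ⊆ Y) ∪ E.filter (fun f => f ⊆ V \ Y))
        (E.filter (fun f => v ∈ f ∧ ∃ w ∈ f, w ∈ Y))
    have u4 := Finset.card_union_le (E.filter (fun f => f ⊆ Y)) (E.filter (fun f => f ⊆ V \ Y))
    obtain ⟨p, hp⟩ : ∃ p, Y.card = p + 3 := ⟨Y.card - 3, by omega⟩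
    obtain ⟨q, hq⟩ : ∃ q, N = p + q + 8 := ⟨N - p - 8, by omega⟩
    have e1 : Y.card - 1 = p + 2 := by omega
    have e2 : N - Y.card - 1 = q + 4 := by omega
    have e3 : N - 1 = (p + 2) + (q + 4) + 1 := by omega
    rw [e1] at g1
    rw [e2] at g2
    rw [e3, C2val, C2add (p + 2) (q + 4)]
    have : (p + 2) * (q + 4) = p * q + 4 * p + 2 * q + 8 := by ring
    have := Nat.zero_le (p * q)
    omega


theorem two_of_mem {p : Finset ℕ} (h : p.card = 2) {a : ℕ} (ha : a ∈ p) :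
    ∃ b, a ≠ b ∧ p = {a, b} := by
  have h2 : (p.erase a).card = 1 := by rw [Finset.card_erase_of_mem ha, h]
  obtain ⟨b, hE⟩ := Finset.card_eq_one.1 h2
  have hb : b ∈ p.erase a := by rw [hE]; simp
  exact ⟨b, (Finset.ne_of_mem_erase hb).symm, by rw [← Finset.insert_erase ha, hE]⟩

theorem pairdeg (B : Finset (Finset ℕ)) (e : Finset ℕ) (he : e.card = 3) {w : ℕ} (hw : w ∈ e)
    (hB : ∀ p ∈ B, p.card = 2 ∧ (w ∈ p → p ⊆ e)) : (B.filter (fun p => w ∈ p)).card ≤ 2 := by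
  obtain ⟨s, t, -, -, -, rfl⟩ := three_of_mem he hw
  refine le_trans (Finset.card_le_card (t := {{w, s}, {w, t}}) ?_) Finset.card_le_two
  intro p hp
  obtain ⟨hp, hwp⟩ := Finset.mem_filter.1 hp
  obtain ⟨h2, h⟩ := hB p hp
  obtain ⟨x, hx, rfl⟩ := two_of_mem h2 hwp
  have := h hwp (show x ∈ _ by simp)
  simp only [Finset.mem_insert, Finset.mem_singleton] at this ⊢
  rcases this with h | h | h
  · exact absurd h.symm hx
  · left; rw [h]
  · right; rw [h]

theorem LB (E : Finset (Finset ℕ)) (V : Finset ℕ) (hG : Good E) (hV : ∀ e ∈ E, e ⊆ V)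
    (hm : 8 ≤ V.card) (hcov : ∀ w ∈ V, ∃ e ∈ E, w ∈ e) (B : Finset (Finset ℕ))
    (hB : ∀ p ∈ B, p.card = 2 ∧ p ⊆ V ∧ ∀ e ∈ E, p ⊆ e ∨ ∀ x ∈ p, x ∉ e) (hne : B.Nonempty) :
    E.card + B.card < (V.card - 1).choose 2 := by
  have htw : ∀ p ∈ B, ∀ e ∈ E, ∀ x ∈ p, x ∈ e → p ⊆ e := by
    intro p hp e he x hx hxe
    rcases (hB p hp).2.2 e he with h | h
    · exact h
    · exact absurd hxe (h x hx)
  have hdeg : ∀ y ∈ V, (B.filter (fun p => y ∈ p)).card ≤ 2 := by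
    intro y hy
    obtain ⟨e, he, hye⟩ := hcov y hy
    exact pairdeg B e (hG.1 e he) hye
      (fun p hp => ⟨(hB p hp).1, fun hyp => htw p hp e he y hyp hye⟩)
  obtain ⟨q, hq⟩ : ∃ q, V.card = q + 8 := ⟨V.card - 8, by omega⟩
  have e0 : V.card - 1 = q + 7 := by omega
  by_cases h : ∃ p ∈ B, ∃ p' ∈ B, p ≠ p' ∧ ∃ w ∈ p, w ∈ p'
  · obtain ⟨p, hp, p', hp', hpp, w, hw, hw'⟩ := h
    obtain ⟨s, hs, rfl⟩ := two_of_mem (hB p hp).1 hw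
    obtain ⟨t, ht, rfl⟩ := two_of_mem (hB p' hp').1 hw'
    have hst : s ≠ t := by rintro rfl; exact hpp rfl
    have hBm : B.card ≤ V.card := count2 B V (fun p hp => by
      rw [Finset.inter_eq_right.2 (hB p hp).2.1, (hB p hp).1]) hdeg
    have hT3 : ({w, s, t} : Finset ℕ).card = 3 := Finset.card_eq_three.2 ⟨w, s, t, hs, ht, hst, rfl⟩
    have hTV : ({w, s, t} : Finset ℕ) ⊆ V := by
      have i1 := (hB _ hp).2.1
      have i2 := (hB _ hp').2.1
      simp only [Finset.insert_subset_iff, Finset.singleton_subset_iff] at i1 i2 ⊢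
      tauto
    have hsub : E ⊆ insert {w, s, t} (E.filter (fun e => e ⊆ V \ {w, s, t})) := by
      intro e he
      rw [Finset.mem_insert, Finset.mem_filter]
      by_cases h : ∃ x ∈ e, x ∈ ({w, s, t} : Finset ℕ)
      · left
        obtain ⟨x, hx, hxT⟩ := h
        have hwe : w ∈ e := by
          simp only [Finset.mem_insert, Finset.mem_singleton] at hxT
          rcases hxT with rfl | rfl | rfl
          · exact hx
          · exact htw _ hp e he x (by simp) hx (by simp)
          · exact htw _ hp' e he x (by simp) hx (by simp)
        have i1 := htw _ hp e he w (by simp) hwe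
        have i2 := htw _ hp' e he w (by simp) hwe
        symm
        apply Finset.eq_of_subset_of_card_le
        · simp only [Finset.insert_subset_iff, Finset.singleton_subset_iff] at i1 i2 ⊢
          tauto
        · rw [hT3, hG.1 e he]
      · right
        push Not at h
        exact ⟨he, fun x hx => Finset.mem_sdiff.2 ⟨hV e he hx, h x hx⟩⟩
    have hc := le_trans (Finset.card_le_card hsub) (Finset.card_insert_le _ _)
    have hg := (gb (q + 5) (E.filter (fun e => e ⊆ V \ {w, s, t})) (V \ {w, s, t})
      (hG.mono (Finset.filter_subset _ _)) (fun e he => (Finset.mem_filter.1 he).2)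
      (by rw [Finset.card_sdiff_of_subset hTV]; omega) (by omega)).1
    have e1 : q + 5 - 1 = q + 4 := by omega
    rw [e1] at hg
    rw [e0, show q + 7 = q + 4 + 3 by omega, C2add (q + 4) 3]
    have : (3 : ℕ).choose 2 = 3 := by decide
    omega
  · push Not at h
    obtain ⟨p, hp⟩ := hne
    obtain ⟨w, w', hww, hpe⟩ := Finset.card_eq_two.1 (hB p hp).1
    have hwp : w ∈ p := by simp [hpe]
    have hwp' : w' ∈ p := by simp [hpe]
    have hwV := (hB p hp).2.1 hwp
    have hwV' := (hB p hp).2.1 hwp'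
    set T := (V \ p).filter (fun z => ({w, w', z} : Finset ℕ) ∈ E) with hT
    have hTs : T ⊆ V \ p := Finset.filter_subset _ _
    have hVp : (V \ p).card = q + 6 := by
      rw [Finset.card_sdiff_of_subset (hB p hp).2.1, (hB p hp).1]; omega
    have hsub : E ⊆ T.image (fun z => ({w, w', z} : Finset ℕ)) ∪ E.filter (fun e => e ⊆ V \ p) := by
      intro e he
      rw [Finset.mem_union, Finset.mem_filter]
      by_cases h : ∃ x ∈ e, x ∈ p
      · left
        obtain ⟨x, hx, hxp⟩ := h
        have hpe' := htw p hp e he x hxp hx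
        obtain ⟨z, hz1, hz2, rfl⟩ := three_of_mem2 (hG.1 e he) (hpe' hwp) (hpe' hwp') hww
        refine Finset.mem_image.2 ⟨z, Finset.mem_filter.2 ⟨Finset.mem_sdiff.2
          ⟨hV _ he (by simp), ?_⟩, he⟩, rfl⟩
        rw [hpe]; simp; exact ⟨hz1.symm, hz2.symm⟩
      · right
        push Not at h
        exact ⟨he, fun x hx => Finset.mem_sdiff.2 ⟨hV e he hx, h x hx⟩⟩
    have hc := le_trans (Finset.card_le_card hsub) (Finset.card_union_le _ _)
    have hi : (T.image (fun z => ({w, w', z} : Finset ℕ))).card ≤ T.card := Finset.card_image_le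
    have hg := (gb (q + 6) (E.filter (fun e => e ⊆ V \ p)) (V \ p)
      (hG.mono (Finset.filter_subset _ _)) (fun e he => (Finset.mem_filter.1 he).2)
      hVp (by omega)).2 (by omega)
    have hYc : ((V \ p) \ T).card = q + 6 - T.card := by
      rw [Finset.card_sdiff_of_subset hTs, hVp]
    have hTc : T.card ≤ q + 6 := hVp ▸ Finset.card_le_card hTs
    have hBc : (B.erase p).card ≤ ((V \ p) \ T).card := by
      apply count2
      · intro r hr
        obtain ⟨hrp, hr⟩ := Finset.mem_erase.1 hr
        have hdis : ∀ x ∈ r, x ∉ p := fun x hx => h r hr p hp hrp x hx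
        have : r ⊆ (V \ p) \ T := by
          intro x hx
          refine Finset.mem_sdiff.2 ⟨Finset.mem_sdiff.2 ⟨(hB r hr).2.1 hx, hdis x hx⟩, ?_⟩
          intro hxT
          obtain ⟨-, hxE⟩ := Finset.mem_filter.1 hxT
          obtain ⟨y, hy, rfl⟩ := two_of_mem (hB r hr).1 hx
          have := htw _ hr _ hxE x (by simp) (by simp) (show y ∈ _ by simp)
          have hyp := hdis y (by simp)
          rw [hpe] at hyp
          simp only [Finset.mem_insert, Finset.mem_singleton] at this hyp
          have := hy.symm
          tauto
        rw [Finset.inter_eq_right.2 this, (hB r hr).1]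
      · intro y hy
        have hyV : y ∈ V := (Finset.mem_sdiff.1 (Finset.mem_sdiff.1 hy).1).1
        refine le_trans (Finset.card_le_card ?_) (hdeg y hyV)
        exact Finset.filter_subset_filter _ (Finset.erase_subset _ _)
    rw [Finset.card_erase_of_mem hp] at hBc
    have e1 : q + 6 - 1 = q + 5 := by omega
    rw [e1] at hg
    rw [e0, show q + 7 = q + 5 + 2 by omega, C2add (q + 5) 2]
    have : (2 : ℕ).choose 2 = 1 := by decide
    omega


/-- Configurations outside `U`: `A1`, `A2` pendant vertices, `B` the centre's pairs. -/
structure Conf (E : Finset (Finset ℕ)) (V A1 A2 : Finset ℕ) (B : Finset (Finset ℕ)) : Prop where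
  good : Good E
  sub : ∀ e ∈ E, e ⊆ V
  a1 : A1 ⊆ V
  a2 : A2 ⊆ V
  hA : ∀ w, w ∈ A1 ∨ w ∈ A2 → ∀ e ∈ E, ∀ g ∈ E, w ∈ e → w ∉ g → ∀ y, M1 e g y → False
  hA2 : ∀ w ∈ A1, ∀ w' ∈ A2, w ≠ w' → ∀ e ∈ E, w ∈ e → w' ∉ e
  hB : ∀ p ∈ B, p.card = 2 ∧ p ⊆ V ∧ (∀ x ∈ p, x ∉ A1 ∧ x ∉ A2) ∧
    ∀ e ∈ E, p ⊆ e ∨ ∀ x ∈ p, x ∉ e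
  deg : ∀ y ∈ V, (B.filter (fun p => y ∈ p)).card ≤ 2

/-- the bounding function -/
def bb (m : ℕ) : ℕ := if m ≤ 4 then 2 * m else if m = 5 then 12 else (m - 1).choose 2 + 5

theorem bb_big (q : ℕ) : bb (q + 6) = (q + 5).choose 2 + 5 := by
  unfold bb; rw [if_neg (by omega), if_neg (by omega)]; rfl

theorem bb_one (m : ℕ) (h : 1 ≤ m) : bb (m - 1) + 2 ≤ bb m := by
  by_cases h6 : m ≤ 6
  · interval_cases m <;> decide
  · obtain ⟨q, rfl⟩ : ∃ q, m = q + 7 := ⟨m - 7, by omega⟩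
    rw [show q + 7 - 1 = q + 6 by omega, bb_big, show q + 7 = q + 1 + 6 by omega, bb_big,
      show q + 1 + 5 = q + 5 + 1 by omega, C2val (q + 5)]
    omega

theorem bb_two (m : ℕ) (h : 2 ≤ m) : bb (m - 2) + max (m - 1) 4 ≤ bb m ∧
    (5 ≤ m → bb (m - 2) + max m 6 ≤ bb m) := by
  by_cases h6 : m ≤ 7
  · interval_cases m <;> decide
  · obtain ⟨q, rfl⟩ : ∃ q, m = q + 8 := ⟨m - 8, by omega⟩
    rw [show q + 8 - 2 = q + 6 by omega, bb_big, show q + 8 = q + 2 + 6 by omega, bb_big,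
      show q + 2 + 5 = q + 5 + 2 by omega, C2add (q + 5) 2]
    have : (2 : ℕ).choose 2 = 1 := by decide
    omega

theorem bb_split (p q : ℕ) (hp : 2 ≤ p) (hq : 2 ≤ q) :
    p.choose 2 + 6 + bb (q + 1) ≤ bb (p + q + 2) := by
  have h1 : bb (q + 1) ≤ q.choose 2 + 6 := by
    by_cases h : q ≤ 4
    · interval_cases q <;> decide
    · obtain ⟨r, rfl⟩ : ∃ r, q = r + 5 := ⟨q - 5, by omega⟩
      rw [show r + 5 + 1 = r + 6 by omega, bb_big]; omega
  obtain ⟨p, rfl⟩ : ∃ r, p = r + 2 := ⟨p - 2, by omega⟩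
  obtain ⟨q, rfl⟩ : ∃ r, q = r + 2 := ⟨q - 2, by omega⟩
  rw [show p + 2 + (q + 2) + 2 = (p + q) + 6 by omega, bb_big,
    show p + q + 5 = (p + 2) + (q + 2) + 1 by omega, C2val (p + 2 + (q + 2)), C2add (p + 2) (q + 2)]
  have : (p + 2) * (q + 2) = p * q + 2 * p + 2 * q + 4 := by ring
  have := Nat.zero_le (p * q)
  omega

theorem Conf.peel {E : Finset (Finset ℕ)} {V A1 A2 : Finset ℕ} {B : Finset (Finset ℕ)}
    (h : Conf E V A1 A2 B) (K : Finset ℕ) (M L : ℕ)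
    (ih : ∀ E' A1' A2' B', Conf E' (V \ K) A1' A2' B' →
      E'.card + A1'.card + A2'.card + B'.card ≤ M)
    (hL : (E.filter (fun e => ∃ x ∈ e, x ∈ K)).card + (A1 ∩ K).card + (A2 ∩ K).card +
      (B.filter (fun p => ∃ x ∈ p, x ∈ K)).card ≤ L) :
    E.card + A1.card + A2.card + B.card ≤ M + L := by
  have hc : Conf (E.filter (fun e => ¬ ∃ x ∈ e, x ∈ K)) (V \ K) (A1 \ K) (A2 \ K)
      (B.filter (fun p => ¬ ∃ x ∈ p, x ∈ K)) := by
    refine ⟨h.good.mono (Finset.filter_subset _ _), ?_, ?_, ?_, ?_, ?_, ?_, ?_⟩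
    · intro e he x hx
      obtain ⟨he, h'⟩ := Finset.mem_filter.1 he
      exact Finset.mem_sdiff.2 ⟨h.sub e he hx, fun hk => h' ⟨x, hx, hk⟩⟩
    · exact Finset.sdiff_subset_sdiff h.a1 le_rfl
    · exact Finset.sdiff_subset_sdiff h.a2 le_rfl
    · intro w hw e he g hg
      refine h.hA w ?_ e (Finset.mem_filter.1 he).1 g (Finset.mem_filter.1 hg).1
      rcases hw with hw | hw
      · exact Or.inl (Finset.mem_sdiff.1 hw).1
      · exact Or.inr (Finset.mem_sdiff.1 hw).1
    · intro w hw w' hw' hne e he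
      exact h.hA2 w (Finset.mem_sdiff.1 hw).1 w' (Finset.mem_sdiff.1 hw').1 hne e
        (Finset.mem_filter.1 he).1
    · intro p hp
      obtain ⟨hp, h'⟩ := Finset.mem_filter.1 hp
      obtain ⟨i1, i2, i3, i4⟩ := h.hB p hp
      refine ⟨i1, ?_, ?_, fun e he => i4 e (Finset.mem_filter.1 he).1⟩
      · intro x hx
        exact Finset.mem_sdiff.2 ⟨i2 hx, fun hk => h' ⟨x, hx, hk⟩⟩
      · intro x hx
        exact ⟨fun hh => (i3 x hx).1 (Finset.mem_sdiff.1 hh).1,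
          fun hh => (i3 x hx).2 (Finset.mem_sdiff.1 hh).1⟩
    · intro y hy
      refine le_trans (Finset.card_le_card ?_) (h.deg y (Finset.mem_sdiff.1 hy).1)
      exact Finset.filter_subset_filter _ (Finset.filter_subset _ _)
  have := ih _ _ _ _ hc
  have i1 := Finset.card_filter_add_card_filter_not (s := E) (fun e => ∃ x ∈ e, x ∈ K)
  have i2 := Finset.card_filter_add_card_filter_not (s := B) (fun e => ∃ x ∈ e, x ∈ K)
  have i3 := Finset.card_inter_add_card_sdiff A1 K
  have i4 := Finset.card_inter_add_card_sdiff A2 K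
  omega

/-- edges containing two given vertices -/
theorem codeg (D : Finset (Finset ℕ)) (V : Finset ℕ) (h3 : ∀ e ∈ D, e.card = 3)
    (hV : ∀ e ∈ D, e ⊆ V) {x y : ℕ} (hxy : x ≠ y) (hx : x ∈ V) (hy : y ∈ V)
    (h : ∀ e ∈ D, x ∈ e ∧ y ∈ e) : D.card ≤ V.card - 2 := by
  have hsub : D ⊆ (V \ {x, y}).image (fun z => ({x, y, z} : Finset ℕ)) := by
    intro e he
    obtain ⟨z, h1, h2, rfl⟩ := three_of_mem2 (h3 e he) (h e he).1 (h e he).2 hxy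
    refine Finset.mem_image.2 ⟨z, Finset.mem_sdiff.2 ⟨hV _ he (by simp), ?_⟩, rfl⟩
    simp; exact ⟨h1.symm, h2.symm⟩
  refine le_trans (Finset.card_le_card hsub) (le_trans Finset.card_image_le ?_)
  rw [Finset.card_sdiff_of_subset (by simp [Finset.insert_subset_iff, hx, hy]),
    Finset.card_pair hxy]


/-- loss when peeling off a pair of `B`. -/
theorem lossB {E : Finset (Finset ℕ)} {V A1 A2 : Finset ℕ} {B : Finset (Finset ℕ)}
    (h : Conf E V A1 A2 B) {p : Finset ℕ} (hp : p ∈ B) :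
    (E.filter (fun e => ∃ x ∈ e, x ∈ p)).card + (A1 ∩ p).card + (A2 ∩ p).card +
      (B.filter (fun r => ∃ x ∈ r, x ∈ p)).card ≤ max (V.card - 1) 4 := by
  have htw : ∀ p ∈ B, ∀ e ∈ E, ∀ x ∈ p, x ∈ e → p ⊆ e := by
    intro p hp e he x hx hxe
    rcases (h.hB p hp).2.2.2 e he with h | h
    · exact h
    · exact absurd hxe (h x hx)
  obtain ⟨h2, hpV, hpA, -⟩ := h.hB p hp
  have z1 : A1 ∩ p = ∅ := by
    apply Finset.eq_empty_of_forall_notMem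
    intro x hx
    obtain ⟨i, j⟩ := Finset.mem_inter.1 hx
    exact (hpA x j).1 i
  have z2 : A2 ∩ p = ∅ := by
    apply Finset.eq_empty_of_forall_notMem
    intro x hx
    obtain ⟨i, j⟩ := Finset.mem_inter.1 hx
    exact (hpA x j).2 i
  have hV2 : 2 ≤ V.card := h2 ▸ Finset.card_le_card hpV
  rw [z1, z2, Finset.card_empty]
  by_cases hq : ∃ r ∈ B, r ≠ p ∧ ∃ x ∈ r, x ∈ p
  · obtain ⟨r, hr, hrp, x, hxr, hxp⟩ := hq
    obtain ⟨y, hxy, rfl⟩ := two_of_mem h2 hxp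
    obtain ⟨z, hxz, rfl⟩ := two_of_mem (h.hB r hr).1 hxr
    have hyz : y ≠ z := by rintro rfl; exact hrp rfl
    have c1 : (E.filter (fun e => ∃ u ∈ e, u ∈ ({x, y} : Finset ℕ))).card ≤ 1 := by
      refine le_trans (Finset.card_le_card (t := {{x, y, z}}) ?_) (by simp)
      intro e he
      obtain ⟨he, u, hu, hup⟩ := Finset.mem_filter.1 he
      have i1 := htw _ hp e he u hup hu
      have i2 := htw _ hr e he x (by simp) (i1 (by simp))
      rw [Finset.mem_singleton]
      symm
      apply Finset.eq_of_subset_of_card_le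
      · simp only [Finset.insert_subset_iff, Finset.singleton_subset_iff] at i1 i2 ⊢
        tauto
      · rw [h.good.1 e he, Finset.card_eq_three.2 ⟨x, y, z, hxy, hxz, hyz, rfl⟩]
    have c2 : (B.filter (fun r => ∃ u ∈ r, u ∈ ({x, y} : Finset ℕ))).card ≤ 3 := by
      have hs : B.filter (fun r => ∃ u ∈ r, u ∈ ({x, y} : Finset ℕ)) ⊆
          B.filter (fun r => x ∈ r) ∪ (B.filter (fun r => y ∈ r)).erase {x, y} := by
        intro t ht
        obtain ⟨ht, u, hu, huxy⟩ := Finset.mem_filter.1 ht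
        by_cases hxt : x ∈ t
        · exact Finset.mem_union_left _ (Finset.mem_filter.2 ⟨ht, hxt⟩)
        · apply Finset.mem_union_right
          simp only [Finset.mem_insert, Finset.mem_singleton] at huxy
          refine Finset.mem_erase.2 ⟨?_, Finset.mem_filter.2 ⟨ht, ?_⟩⟩
          · rintro rfl; simp at hxt
          · rcases huxy with rfl | rfl
            · exact absurd hu hxt
            · exact hu
      have i1 := le_trans (Finset.card_le_card hs) (Finset.card_union_le _ _)
      have i2 := h.deg x (hpV (by simp))
      have i3 := h.deg y (hpV (by simp))
      rw [Finset.card_erase_of_mem (Finset.mem_filter.2 ⟨hp, by simp⟩)] at i1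
      omega
    omega
  · push Not at hq
    obtain ⟨x, y, hxy, rfl⟩ := Finset.card_eq_two.1 h2
    have c1 := codeg (E.filter (fun e => ∃ u ∈ e, u ∈ ({x, y} : Finset ℕ))) V
      (fun e he => h.good.1 e (Finset.mem_filter.1 he).1)
      (fun e he => h.sub e (Finset.mem_filter.1 he).1) hxy (hpV (by simp)) (hpV (by simp))
      (fun e he => by
        obtain ⟨he, u, hu, hup⟩ := Finset.mem_filter.1 he
        have i1 := htw _ hp e he u hup hu
        exact ⟨i1 (by simp), i1 (by simp)⟩)
    have c2 : (B.filter (fun r => ∃ u ∈ r, u ∈ ({x, y} : Finset ℕ))).card ≤ 1 := by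
      refine le_trans (Finset.card_le_card (t := {{x, y}}) ?_) (by simp)
      intro t ht
      obtain ⟨ht, u, hu, huxy⟩ := Finset.mem_filter.1 ht
      rw [Finset.mem_singleton]
      by_contra hne
      exact hq t ht hne u hu huxy
    omega

/-- small case -/
theorem phi_small {E : Finset (Finset ℕ)} {V A1 A2 : Finset ℕ}
    (h : Conf E V A1 A2 ∅) (hm : V.card ≤ 4)
    (hcov : ∀ w, w ∈ A1 ∨ w ∈ A2 → ∃ e ∈ E, w ∈ e) :
    E.card + A1.card + A2.card ≤ 2 * V.card := by
  have hE : E.card ≤ V.card.choose 3 := by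
    rw [← Finset.card_powersetCard]
    exact Finset.card_le_card (fun e he => Finset.mem_powersetCard.2 ⟨h.sub e he, h.good.1 e he⟩)
  have hE' : V.card.choose 3 ≤ V.card := by
    interval_cases V.card <;> decide
  by_cases hd : ∃ w ∈ A1, w ∈ A2
  · obtain ⟨w, hw1, hw2⟩ := hd
    obtain ⟨e, he, hwe⟩ := hcov w (Or.inl hw1)
    have hs1 : A1 ⊆ V \ (e.erase w) := by
      intro x hx
      refine Finset.mem_sdiff.2 ⟨h.a1 hx, fun hxe => ?_⟩
      obtain ⟨i, j⟩ := Finset.mem_erase.1 hxe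
      exact h.hA2 x hx w hw2 i e he j hwe
    have hs2 : A2 ⊆ V \ (e.erase w) := by
      intro x hx
      refine Finset.mem_sdiff.2 ⟨h.a2 hx, fun hxe => ?_⟩
      obtain ⟨i, j⟩ := Finset.mem_erase.1 hxe
      exact h.hA2 w hw1 x hx i.symm e he hwe j
    have hc : (V \ (e.erase w)).card = V.card - 2 := by
      rw [Finset.card_sdiff_of_subset (fun x hx => h.sub e he (Finset.mem_of_mem_erase hx)),
        Finset.card_erase_of_mem hwe, h.good.1 e he]
    have := Finset.card_le_card hs1
    have := Finset.card_le_card hs2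
    have h3 : 3 ≤ V.card := h.good.1 e he ▸ Finset.card_le_card (h.sub e he)
    omega
  · have : A1.card + A2.card ≤ V.card := by
      rw [← Finset.card_union_of_disjoint]
      · exact Finset.card_le_card (Finset.union_subset h.a1 h.a2)
      · rw [Finset.disjoint_left]; intro x hx hx'; exact hd ⟨x, hx, hx'⟩
    omega

set_option maxHeartbeats 2000000 in
/-- adjacent pair of pendant vertices: edges meeting the pair pairwise share two vertices. -/
theorem loss_adj {E : Finset (Finset ℕ)} {V A1 A2 : Finset ℕ}
    (h : Conf E V A1 A2 ∅) {w w' : ℕ} (hw : w ∈ A1 ∨ w ∈ A2) (hw' : w' ∈ A1 ∨ w' ∈ A2)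
    (hne : w ≠ w') {e : Finset ℕ} (he : e ∈ E) (hwe : w ∈ e) (hwe' : w' ∈ e) :
    (E.filter (fun e => ∃ x ∈ e, x ∈ ({w, w'} : Finset ℕ))).card +
      (A1 ∩ {w, w'}).card + (A2 ∩ {w, w'}).card ≤ max V.card 6 := by
  have hV3 : 3 ≤ V.card := h.good.1 e he ▸ Finset.card_le_card (h.sub e he)
  have hA : (A1 ∩ {w, w'}).card + (A2 ∩ {w, w'}).card ≤ 2 := by
    have hdisj : Disjoint (A1 ∩ {w, w'}) (A2 ∩ {w, w'}) := by
      rw [Finset.disjoint_left]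
      intro x hx hx'
      obtain ⟨i1, i2⟩ := Finset.mem_inter.1 hx
      obtain ⟨i3, -⟩ := Finset.mem_inter.1 hx'
      simp only [Finset.mem_insert, Finset.mem_singleton] at i2
      rcases i2 with rfl | rfl
      · rcases hw' with j | j
        · exact h.hA2 w' j x i3 hne.symm e he hwe' hwe
        · exact h.hA2 x i1 w' j hne e he hwe hwe'
      · rcases hw with j | j
        · exact h.hA2 w j x i3 hne e he hwe hwe'
        · exact h.hA2 x i1 w j hne.symm e he hwe' hwe
    rw [← Finset.card_union_of_disjoint hdisj]
    refine le_trans (Finset.card_le_card (t := {w, w'}) ?_) Finset.card_le_two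
    exact Finset.union_subset Finset.inter_subset_right Finset.inter_subset_right
  obtain ⟨y, hy1, hy2, hey⟩ := three_of_mem2 (h.good.1 e he) hwe hwe' hne
  -- an edge through exactly one of `w`, `w'` contains `y`
  have hy : ∀ g ∈ E, (w ∈ g ∨ w' ∈ g) → (w ∉ g ∨ w' ∉ g) → y ∈ g := by
    intro g hg i1 i2
    by_contra hyg
    by_cases hwg : w ∈ g
    · have hwg' : w' ∉ g := by tauto
      refine h.hA w' hw' e he g hg hwe' hwg' w ⟨hwe, hwg, ?_⟩
      intro x hx hxg
      rw [hey] at hx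
      simp only [Finset.mem_insert, Finset.mem_singleton] at hx
      rcases hx with rfl | rfl | rfl
      · rfl
      · exact absurd hxg hwg'
      · exact absurd hxg hyg
    · have hwg' : w' ∈ g := by tauto
      refine h.hA w hw e he g hg hwe hwg w' ⟨hwe', hwg', ?_⟩
      intro x hx hxg
      rw [hey] at hx
      simp only [Finset.mem_insert, Finset.mem_singleton] at hx
      rcases hx with rfl | rfl | rfl
      · exact absurd hxg hwg
      · rfl
      · exact absurd hxg hyg
  have hD := two_inter (E.filter (fun e => ∃ x ∈ e, x ∈ ({w, w'} : Finset ℕ))) V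
    (fun e he => h.good.1 e (Finset.mem_filter.1 he).1)
    (fun e he => h.sub e (Finset.mem_filter.1 he).1)
    (by
      intro f hf g hg z hm
      obtain ⟨hf, hf'⟩ := Finset.mem_filter.1 hf
      obtain ⟨hg, hg'⟩ := Finset.mem_filter.1 hg
      have hm' : M1 g f z := ⟨hm.2.1, hm.1, fun x i j => hm.2.2 x j i⟩
      have a1 := fun i j => h.hA w hw f hf g hg i j z hm
      have a2 := fun i j => h.hA w hw g hg f hf i j z hm'
      have a3 := fun i j => h.hA w' hw' f hf g hg i j z hm
      have a4 := fun i j => h.hA w' hw' g hg f hf i j z hm'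
      have b1 := hy f hf
      have b2 := hy g hg
      have c1 := hm.2.2 w
      have c2 := hm.2.2 w'
      have c3 := hm.2.2 y
      simp only [Finset.mem_insert, Finset.mem_singleton, and_or_left,
        exists_or, exists_eq_right] at hf' hg'
      clear * - a1 a2 a3 a4 b1 b2 c1 c2 c3 hf' hg' hne hy1 hy2
      by_cases p1 : w ∈ f <;> by_cases p2 : w' ∈ f <;> by_cases p3 : w ∈ g <;>
        by_cases p4 : w' ∈ g <;> simp_all)
    (by
      intro f hf g hg
      obtain ⟨hf, hf'⟩ := Finset.mem_filter.1 hf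
      obtain ⟨hg, hg'⟩ := Finset.mem_filter.1 hg
      have b1 := hy f hf
      have b2 := hy g hg
      simp only [Finset.mem_insert, Finset.mem_singleton, and_or_left,
        exists_or, exists_eq_right] at hf' hg'
      by_contra hcon
      push Not at hcon
      have c1 := hcon w
      have c2 := hcon w'
      have c3 := hcon y
      tauto)
  omega


set_option maxHeartbeats 2000000 in
theorem phi : ∀ m : ℕ, ∀ (E : Finset (Finset ℕ)) (V A1 A2 : Finset ℕ) (B : Finset (Finset ℕ)),
    Conf E V A1 A2 B → V.card = m → E.card + A1.card + A2.card + B.card ≤ bb m := by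
  intro m
  induction m using Nat.strong_induction_on with
  | _ m ih =>
  intro E V A1 A2 B h hm
  have ih' : ∀ K : Finset ℕ, K ⊆ V → K.Nonempty → ∀ E' A1' A2' B', Conf E' (V \ K) A1' A2' B' →
      E'.card + A1'.card + A2'.card + B'.card ≤ bb (m - K.card) := by
    intro K hK hKn E' A1' A2' B' hc
    have h1 := Finset.card_pos.2 hKn
    have h2 := Finset.card_le_card hK
    exact ih (m - K.card) (by omega) _ _ _ _ _ hc (by rw [Finset.card_sdiff_of_subset hK, hm])
  by_cases hB : B.Nonempty
  · obtain ⟨p, hp⟩ := hB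
    have h2 := (h.hB p hp).1
    have hpV := (h.hB p hp).2.1
    have hc := Finset.card_le_card hpV
    have hpe := h.peel p _ _ (ih' p hpV (Finset.card_pos.1 (by omega))) (lossB h hp)
    rw [h2, hm] at hpe
    exact le_trans hpe (bb_two m (by omega)).1
  rw [Finset.not_nonempty_iff_eq_empty] at hB
  subst hB
  by_cases hcov : ∃ w, (w ∈ A1 ∨ w ∈ A2) ∧ ∀ e ∈ E, w ∉ e
  · obtain ⟨w, hw, hwe⟩ := hcov
    have hwV : w ∈ V := by
      rcases hw with hw | hw
      · exact h.a1 hw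
      · exact h.a2 hw
    have hpe := h.peel {w} _ 2 (ih' {w} (by simpa using hwV) (by simp)) (by
      have i1 : (E.filter (fun e => ∃ x ∈ e, x ∈ ({w} : Finset ℕ))).card = 0 := by
        rw [Finset.card_eq_zero, Finset.filter_eq_empty_iff]
        rintro e he ⟨x, hx, hxw⟩
        rw [Finset.mem_singleton.1 hxw] at hx
        exact hwe e he hx
      have i2 : (A1 ∩ {w}).card ≤ 1 := le_trans (Finset.card_le_card Finset.inter_subset_right)
        (by simp)
      have i3 : (A2 ∩ {w}).card ≤ 1 := le_trans (Finset.card_le_card Finset.inter_subset_right)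
        (by simp)
      rw [i1, Finset.filter_empty, Finset.card_empty]
      omega)
    have : 1 ≤ m := by rw [← hm]; exact Finset.card_pos.2 ⟨w, hwV⟩
    rw [Finset.card_singleton] at hpe
    exact le_trans hpe (bb_one m this)
  push Not at hcov
  by_cases hm4 : m ≤ 4
  · have := phi_small h (by omega) hcov
    have e : bb m = 2 * m := by unfold bb; rw [if_pos hm4]
    rw [Finset.card_empty]
    omega
  by_cases hZ : (A1 ∪ A2).card ≤ 1
  · have i1 := le_trans (Finset.card_le_card (Finset.subset_union_left (s₁ := A1) (s₂ := A2))) hZ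
    have i2 := le_trans (Finset.card_le_card (Finset.subset_union_right (s₁ := A1) (s₂ := A2))) hZ
    have g := gb m E V h.good h.sub hm (by omega)
    rw [Finset.card_empty]
    by_cases h5 : m = 5
    · subst h5
      have e : (5 - 1 : ℕ).choose 2 = 6 := by decide
      have e2 : bb 5 = 12 := by decide
      rw [e] at g; omega
    · have g2 := g.2 (by omega)
      have e : bb m = (m - 1).choose 2 + 5 := by
        unfold bb; rw [if_neg hm4, if_neg h5]
      omega
  by_cases hadj : ∃ w w', (w ∈ A1 ∨ w ∈ A2) ∧ (w' ∈ A1 ∨ w' ∈ A2) ∧ w ≠ w' ∧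
      ∃ e ∈ E, w ∈ e ∧ w' ∈ e
  · obtain ⟨w, w', hw, hw', hne, e, he, hwe, hwe'⟩ := hadj
    have hs : ({w, w'} : Finset ℕ) ⊆ V := by
      simp only [Finset.insert_subset_iff, Finset.singleton_subset_iff]
      exact ⟨h.sub e he hwe, h.sub e he hwe'⟩
    have hpe := h.peel {w, w'} _ (max m 6) (ih' {w, w'} hs (by simp)) (by
      have := loss_adj h hw hw' hne he hwe hwe'
      rw [Finset.filter_empty, Finset.card_empty, ← hm]
      exact this)
    rw [Finset.card_pair hne] at hpe
    exact le_trans hpe ((bb_two m (by omega)).2 (by omega))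
  push Not at hadj
  by_cases htwin : ∃ w, (w ∈ A1 ∨ w ∈ A2) ∧ ∃ y z, y ≠ z ∧ w ≠ y ∧ w ≠ z ∧
      ({w, y, z} : Finset ℕ) ∈ E ∧ ∀ g ∈ E, w ∈ g → (y ∈ g ↔ z ∈ g)
  · obtain ⟨w, hw, y, z, hyz, hwy, hwz, he, htw⟩ := htwin
    have hs : ({y, z} : Finset ℕ) ⊆ V := by
      have := h.sub _ he
      simp only [Finset.insert_subset_iff, Finset.singleton_subset_iff] at this ⊢
      exact this.2
    have hyA : ¬ (y ∈ A1 ∨ y ∈ A2) := fun hy => hadj w y hw hy hwy _ he (by simp) (by simp)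
    have hzA : ¬ (z ∈ A1 ∨ z ∈ A2) := fun hz => hadj w z hw hz hwz _ he (by simp) (by simp)
    have hall : ∀ g ∈ E, (y ∈ g ↔ z ∈ g) := by
      intro g hg
      by_cases hwg : w ∈ g
      · exact htw g hg hwg
      · constructor
        · intro hy
          by_contra hz
          refine h.hA w hw _ he g hg (by simp) hwg y ⟨by simp, hy, ?_⟩
          intro x hx hxg
          simp only [Finset.mem_insert, Finset.mem_singleton] at hx
          rcases hx with rfl | rfl | rfl
          · exact absurd hxg hwg
          · rfl
          · exact absurd hxg hz
        · intro hz
          by_contra hy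
          refine h.hA w hw _ he g hg (by simp) hwg z ⟨by simp, hz, ?_⟩
          intro x hx hxg
          simp only [Finset.mem_insert, Finset.mem_singleton] at hx
          rcases hx with rfl | rfl | rfl
          · exact absurd hxg hwg
          · exact absurd hxg hy
          · rfl
    have hpe := h.peel {y, z} _ (max (m - 1) 4) (ih' {y, z} hs (by simp)) (by
      have c1 := codeg (E.filter (fun e => ∃ x ∈ e, x ∈ ({y, z} : Finset ℕ))) V
        (fun e he => h.good.1 e (Finset.mem_filter.1 he).1)
        (fun e he => h.sub e (Finset.mem_filter.1 he).1) hyz (hs (by simp)) (hs (by simp))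
        (fun e he => by
          obtain ⟨he, u, hu, hup⟩ := Finset.mem_filter.1 he
          have := hall e he
          simp only [Finset.mem_insert, Finset.mem_singleton] at hup
          rcases hup with rfl | rfl <;> tauto)
      have z1 : A1 ∩ {y, z} = ∅ := by
        apply Finset.eq_empty_of_forall_notMem
        intro x hx
        obtain ⟨i, j⟩ := Finset.mem_inter.1 hx
        simp only [Finset.mem_insert, Finset.mem_singleton] at j
        rcases j with rfl | rfl <;> tauto
      have z2 : A2 ∩ {y, z} = ∅ := by
        apply Finset.eq_empty_of_forall_notMem
        intro x hx
        obtain ⟨i, j⟩ := Finset.mem_inter.1 hx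
        simp only [Finset.mem_insert, Finset.mem_singleton] at j
        rcases j with rfl | rfl <;> tauto
      simp only [z1, z2, Finset.filter_empty, Finset.card_empty]
      omega)
    rw [Finset.card_pair hyz] at hpe
    exact le_trans hpe (bb_two m (by omega)).1
  push Not at htwin
  obtain ⟨w, hwZ, w', hwZ', hne⟩ := Finset.one_lt_card.1 (not_le.1 hZ)
  rw [Finset.mem_union] at hwZ hwZ'
  set K := (E.filter (fun e => w ∈ e)).biUnion id with hK
  have memK : ∀ x, x ∈ K ↔ ∃ e ∈ E, w ∈ e ∧ x ∈ e := by
    intro x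
    simp [hK, and_assoc]
  have hKV : K ⊆ V := by
    intro x hx
    obtain ⟨e, he, -, hxe⟩ := (memK x).1 hx
    exact h.sub e he hxe
  obtain ⟨e0, he0, hwe0⟩ := hcov w hwZ
  have hK3 : 3 ≤ K.card := by
    rw [← h.good.1 e0 he0]
    exact Finset.card_le_card (fun x hx => (memK x).2 ⟨e0, he0, hwe0, hx⟩)
  have hclosed : ∀ g ∈ E, (∃ x ∈ g, x ∈ K) → g ⊆ K := by
    rintro g hg ⟨y, hyg, hyK⟩
    by_cases hwg : w ∈ g
    · exact fun x hx => (memK x).2 ⟨g, hg, hwg, hx⟩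
    · obtain ⟨e, he, hwe, hye⟩ := (memK y).1 hyK
      have hwy : w ≠ y := by rintro rfl; exact hwg hyg
      obtain ⟨z, hwz, hyz, rfl⟩ := three_of_mem2 (h.good.1 e he) hwe hye hwy
      have two : ∀ f ∈ E, w ∈ f → ∀ x ∈ f, x ∈ g → ∃ t ∈ f, t ∈ g ∧ t ≠ x := by
        intro f hf hwf x hxf hxg
        by_contra hcon
        push Not at hcon
        exact h.hA w hwZ f hf g hg hwf hwg x ⟨hxf, hxg, fun t ht ht' => hcon t ht ht'⟩
      have hzg : z ∈ g := by
        obtain ⟨t, ht, htg, hty⟩ := two _ he hwe y hye hyg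
        simp only [Finset.mem_insert, Finset.mem_singleton] at ht
        rcases ht with rfl | rfl | rfl
        · exact absurd htg hwg
        · exact absurd rfl hty
        · exact htg
      obtain ⟨f, hf, hwf, hfx⟩ := htwin w hwZ y z hyz hwy hwz he
      obtain ⟨t, hyt, hzt, hgt⟩ := three_of_mem2 (h.good.1 g hg) hyg hzg hyz
      have htf : t ∈ f := by
        rcases hfx with ⟨i, j⟩ | ⟨i, j⟩
        · obtain ⟨s, hs, hsg, hsy⟩ := two f hf hwf y i hyg
          rw [hgt] at hsg
          simp only [Finset.mem_insert, Finset.mem_singleton] at hsg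
          rcases hsg with rfl | rfl | rfl
          · exact absurd rfl hsy
          · exact absurd hs j
          · exact hs
        · obtain ⟨s, hs, hsg, hsy⟩ := two f hf hwf z j hzg
          rw [hgt] at hsg
          simp only [Finset.mem_insert, Finset.mem_singleton] at hsg
          rcases hsg with rfl | rfl | rfl
          · exact absurd hs i
          · exact absurd rfl hsy
          · exact hs
      rw [hgt]
      simp only [Finset.insert_subset_iff, Finset.singleton_subset_iff]
      exact ⟨hyK, (memK z).2 ⟨_, he, hwe, by simp⟩, (memK t).2 ⟨f, hf, hwf, htf⟩⟩
  have hw'K : w' ∉ K := by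
    intro hh
    obtain ⟨e, he, hwe, hwe'⟩ := (memK w').1 hh
    exact hadj w w' hwZ hwZ' hne e he hwe hwe'
  obtain ⟨e1, he1, hwe1⟩ := hcov w' hwZ'
  have hM3 : K.card + 3 ≤ m := by
    rw [← h.good.1 e1 he1, ← hm, ← Finset.card_union_of_disjoint]
    · exact Finset.card_le_card (Finset.union_subset hKV (h.sub e1 he1))
    · rw [Finset.disjoint_left]
      intro x hx hx'
      exact hw'K (hclosed e1 he1 ⟨x, hx', hx⟩ hwe1)
  have hKA : ∀ x, (x ∈ A1 ∨ x ∈ A2) → x ∈ K → x = w := by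
    intro x hx hxK
    by_contra hxw
    obtain ⟨e, he, hwe, hxe⟩ := (memK x).1 hxK
    exact hadj w x hwZ hx (Ne.symm hxw) e he hwe hxe
  have hpe := h.peel K _ ((K.card - 1).choose 2 + 6)
    (ih' K hKV (Finset.card_pos.1 (by omega))) (by
    have g := (gb K.card (E.filter (fun e => ∃ x ∈ e, x ∈ K)) K
      (h.good.mono (Finset.filter_subset _ _))
      (fun e he => hclosed e (Finset.mem_filter.1 he).1 (Finset.mem_filter.1 he).2) rfl
      (by omega)).1
    have i1 : (A1 ∩ K).card ≤ 1 := by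
      refine le_trans (Finset.card_le_card (t := {w}) ?_) (by simp)
      intro x hx
      obtain ⟨i, j⟩ := Finset.mem_inter.1 hx
      exact Finset.mem_singleton.2 (hKA x (Or.inl i) j)
    have i2 : (A2 ∩ K).card ≤ 1 := by
      refine le_trans (Finset.card_le_card (t := {w}) ?_) (by simp)
      intro x hx
      obtain ⟨i, j⟩ := Finset.mem_inter.1 hx
      exact Finset.mem_singleton.2 (hKA x (Or.inr i) j)
    rw [Finset.filter_empty, Finset.card_empty]
    omega)
  have hb := bb_split (K.card - 1) (m - K.card - 1) (by omega) (by omega)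
  rw [show m - K.card - 1 + 1 = m - K.card by omega,
    show K.card - 1 + (m - K.card - 1) + 2 = m by omega] at hb
  omega


theorem EU4 {E : Finset (Finset ℕ)} (hG : Good E) {v a b c d : ℕ}
    (hd : List.Pairwise (· ≠ ·) [v, a, b, c, d]) {e : Finset ℕ} (he : e ∈ E)
    (heU : ∀ x ∈ e, x ∉ ({v, a, b, c, d} : Finset ℕ)) {w : ℕ} (hw : w ∈ e)
    (hA : ({a, b, w} : Finset ℕ) ∈ E) :
    (E.filter (fun f => f ⊆ ({v, a, b, c, d} : Finset ℕ))).card ≤ 4 := by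
  simp only [List.pairwise_cons, List.mem_cons, forall_eq_or_imp, List.not_mem_nil] at hd
  obtain ⟨⟨va, vb, vc, vd, -⟩, ⟨ab, ac, ad, -⟩, ⟨bc, bd, -⟩, ⟨cd, -⟩, -⟩ := hd
  have hwU := heU w hw
  have hae : a ∉ e := fun h => heU a h (by simp)
  have hbe : b ∉ e := fun h => heU b h (by simp)
  have hm : M1 {a, b, w} e w := by
    refine ⟨by simp, hw, ?_⟩
    intro x hx hxe
    simp only [Finset.mem_insert, Finset.mem_singleton] at hx
    rcases hx with rfl | rfl | rfl
    · exact absurd hxe hae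
    · exact absurd hxe hbe
    · rfl
  refine le_trans (Finset.card_le_card
    (t := {{a, b, v}, {a, b, c}, {a, b, d}, {v, c, d}}) ?_) Finset.card_le_four
  intro f hf
  obtain ⟨hf, hfU⟩ := Finset.mem_filter.1 hf
  have hwf : w ∉ f := fun h => hwU (hfU h)
  have hdis : ∀ x ∈ f, x ∉ e := fun x hx hxe => heU x hxe (hfU hx)
  have hiff : a ∈ f ↔ b ∈ f := by
    constructor
    · intro i
      by_contra j
      refine hG.2.1 f hf _ hA e he a w ⟨i, by simp, ?_⟩ hm hdis
      intro x hx hx'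
      simp only [Finset.mem_insert, Finset.mem_singleton] at hx'
      rcases hx' with rfl | rfl | rfl
      · rfl
      · exact absurd hx j
      · exact absurd hx hwf
    · intro i
      by_contra j
      refine hG.2.1 f hf _ hA e he b w ⟨i, by simp, ?_⟩ hm hdis
      intro x hx hx'
      simp only [Finset.mem_insert, Finset.mem_singleton] at hx'
      rcases hx' with rfl | rfl | rfl
      · exact absurd hx j
      · rfl
      · exact absurd hx hwf
  simp only [Finset.mem_insert, Finset.mem_singleton]
  by_cases haf : a ∈ f
  · obtain ⟨x, hx1, hx2, rfl⟩ := three_of_mem2 (hG.1 f hf) haf (hiff.1 haf) ab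
    have := hfU (show x ∈ _ by simp)
    simp only [Finset.mem_insert, Finset.mem_singleton] at this
    rcases this with rfl | rfl | rfl | rfl | rfl
    · exact Or.inl rfl
    · exact absurd rfl hx1
    · exact absurd rfl hx2
    · exact Or.inr (Or.inl rfl)
    · exact Or.inr (Or.inr (Or.inl rfl))
  · have hbf : b ∉ f := fun h => haf (hiff.2 h)
    refine Or.inr (Or.inr (Or.inr ?_))
    apply Finset.eq_of_subset_of_card_le
    · intro x hx
      have := hfU hx
      simp only [Finset.mem_insert, Finset.mem_singleton] at this ⊢
      rcases this with rfl | rfl | rfl | rfl | rfl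
      · exact Or.inl rfl
      · exact absurd hx haf
      · exact absurd hx hbf
      · exact Or.inr (Or.inl rfl)
      · exact Or.inr (Or.inr rfl)
    · rw [hG.1 f hf]; exact Finset.card_le_three

set_option maxHeartbeats 2000000 in
theorem main_aux {E : Finset (Finset ℕ)} (hG : Good E) {v a b c d : ℕ}
    (hd : List.Pairwise (· ≠ ·) [v, a, b, c, d])
    (h1 : ({v, a, b} : Finset ℕ) ∈ E) (h2 : ({v, c, d} : Finset ℕ) ∈ E) (W : Finset ℕ)
    (hW : ∀ x ∈ W, x ∉ ({v, a, b, c, d} : Finset ℕ)) (hm : 8 ≤ W.card)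
    (hV : ∀ f ∈ E, ∀ x ∈ f, x ∈ ({v, a, b, c, d} : Finset ℕ) ∨ x ∈ W)
    (hcov : ∀ w ∈ W, ∃ e ∈ E, w ∈ e ∧ e ⊆ W)
    (hcr : ∃ f ∈ E, (∃ u ∈ f, u ∈ ({v, a, b, c, d} : Finset ℕ)) ∧ ∃ w ∈ f, w ∈ W) :
    E.card < 10 + (W.card - 1).choose 2 := by
  have hd0 := hd
  have hd2 : List.Pairwise (· ≠ ·) [v, c, d, a, b] := by
    simp at hd ⊢; grind
  have hUeq : ({v, c, d, a, b} : Finset ℕ) = {v, a, b, c, d} := by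
    ext x; simp; tauto
  simp only [List.pairwise_cons, List.mem_cons, forall_eq_or_imp, List.not_mem_nil] at hd0
  obtain ⟨⟨va, vb, vc, vd, -⟩, ⟨ab, ac, ad, -⟩, ⟨bc, bd, -⟩, ⟨cd, -⟩, -⟩ := hd0
  have hWn : ∀ x ∈ W, x ≠ v ∧ x ≠ a ∧ x ≠ b ∧ x ≠ c ∧ x ≠ d := by
    intro x hx; have := hW x hx; simpa using this
  set G := E.filter (fun f => f ⊆ W) with hGdef
  set A1 := W.filter (fun w => ({a, b, w} : Finset ℕ) ∈ E) with hA1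
  set A2 := W.filter (fun w => ({c, d, w} : Finset ℕ) ∈ E) with hA2
  set B := (W.powersetCard 2).filter (fun p => insert v p ∈ E) with hB
  set EU := E.filter (fun f => f ⊆ ({v, a, b, c, d} : Finset ℕ)) with hEU
  have memG : ∀ e, e ∈ G ↔ e ∈ E ∧ e ⊆ W := fun e => Finset.mem_filter
  have memA1 : ∀ w, w ∈ A1 ↔ w ∈ W ∧ ({a, b, w} : Finset ℕ) ∈ E := fun e => Finset.mem_filter
  have memA2 : ∀ w, w ∈ A2 ↔ w ∈ W ∧ ({c, d, w} : Finset ℕ) ∈ E := fun e => Finset.mem_filter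
  have memB : ∀ p, p ∈ B ↔ (p ⊆ W ∧ p.card = 2) ∧ insert v p ∈ E := by
    intro p; rw [hB, Finset.mem_filter, Finset.mem_powersetCard]
  have hGU : ∀ e ∈ G, ∀ x ∈ e, x ∉ ({v, a, b, c, d} : Finset ℕ) :=
    fun e he x hx => hW x (((memG e).1 he).2 hx)
  have cross : ∀ f ∈ E, ∀ w ∈ f, w ∈ W → ∀ u ∈ f, u ∈ ({v, a, b, c, d} : Finset ℕ) →
      f = {a, b, w} ∨ f = {c, d, w} ∨ ∃ w' ∈ W, w' ≠ w ∧ f = {v, w, w'} := by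
    intro f hf w hw hwW u hu huU
    obtain ⟨e, he, hwe, heW⟩ := hcov w hwW
    rcases crossing hG hd h1 h2 he (hGU e ((memG e).2 ⟨he, heW⟩)) hwe hf hw hu huU with h | h | h
    · exact Or.inl h
    · exact Or.inr (Or.inl h)
    · obtain ⟨w', hw', h⟩ := h
      exact Or.inr (Or.inr ⟨w', heW hw', h⟩)
  have clsB : ∀ w w', w ∈ W → w' ∈ W → w' ≠ w → ({v, w, w'} : Finset ℕ) ∈ E →
      ({w, w'} : Finset ℕ) ∈ B := by
    intro w w' i1 i2 i3 i4
    refine (memB _).2 ⟨⟨?_, Finset.card_pair i3.symm⟩, i4⟩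
    simp [Finset.insert_subset_iff, i1, i2]
  have hsub : E ⊆ EU ∪ G ∪ A1.image (fun w => ({a, b, w} : Finset ℕ)) ∪
      A2.image (fun w => ({c, d, w} : Finset ℕ)) ∪ B.image (insert v) := by
    intro f hf
    simp only [Finset.mem_union]
    by_cases i1 : ∃ w ∈ f, w ∈ W
    · by_cases i2 : ∃ u ∈ f, u ∈ ({v, a, b, c, d} : Finset ℕ)
      · obtain ⟨w, hw, hwW⟩ := i1
        obtain ⟨u, hu, huU⟩ := i2
        rcases cross f hf w hw hwW u hu huU with h | h | ⟨w', hw', hne, h⟩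
        · exact Or.inl (Or.inl (Or.inr (Finset.mem_image.2
            ⟨w, (memA1 w).2 ⟨hwW, h ▸ hf⟩, h.symm⟩)))
        · exact Or.inl (Or.inr (Finset.mem_image.2 ⟨w, (memA2 w).2 ⟨hwW, h ▸ hf⟩, h.symm⟩))
        · exact Or.inr (Finset.mem_image.2 ⟨{w, w'}, clsB w w' hwW hw' hne (h ▸ hf), h.symm⟩)
      · push Not at i2
        exact Or.inl (Or.inl (Or.inl (Or.inr ((memG f).2
          ⟨hf, fun x hx => (hV f hf x hx).resolve_left (i2 x hx)⟩))))
    · push Not at i1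
      exact Or.inl (Or.inl (Or.inl (Or.inl (Finset.mem_filter.2
        ⟨hf, fun x hx => (hV f hf x hx).resolve_right (i1 x hx)⟩))))
  have hc := Finset.card_le_card hsub
  have u1 := Finset.card_union_le (EU ∪ G ∪ A1.image (fun w => ({a, b, w} : Finset ℕ)) ∪
      A2.image (fun w => ({c, d, w} : Finset ℕ))) (B.image (insert v))
  have u2 := Finset.card_union_le (EU ∪ G ∪ A1.image (fun w => ({a, b, w} : Finset ℕ)))
      (A2.image (fun w => ({c, d, w} : Finset ℕ)))
  have u3 := Finset.card_union_le (EU ∪ G) (A1.image (fun w => ({a, b, w} : Finset ℕ)))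
  have u4 := Finset.card_union_le EU G
  have c1 : (A1.image (fun w => ({a, b, w} : Finset ℕ))).card ≤ A1.card := Finset.card_image_le
  have c2 : (A2.image (fun w => ({c, d, w} : Finset ℕ))).card ≤ A2.card := Finset.card_image_le
  have c3 : (B.image (insert v)).card ≤ B.card := Finset.card_image_le
  -- pairs of B versus edges of G
  have htw : ∀ p ∈ B, ∀ e ∈ G, ∀ x ∈ p, x ∈ e → p ⊆ e := by
    intro p hp e he x hx hxe
    obtain ⟨⟨hpW, hp2⟩, hpE⟩ := (memB p).1 hp
    obtain ⟨heE, heW⟩ := (memG e).1 he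
    obtain ⟨y, hxy, rfl⟩ := two_of_mem hp2 hx
    have nx := hWn x (heW hxe)
    have ny := hWn y (hpW (by simp))
    rcases crossing hG hd h1 h2 heE (hGU e he) hxe hpE (u := v) (by simp) (by simp) (by simp)
      with h | h | ⟨w', hw', hne, h⟩
    · exfalso
      have : v ∈ ({a, b, x} : Finset ℕ) := by rw [← h]; simp
      simp only [Finset.mem_insert, Finset.mem_singleton] at this
      have := nx.1.symm
      tauto
    · exfalso
      have : v ∈ ({c, d, x} : Finset ℕ) := by rw [← h]; simp
      simp only [Finset.mem_insert, Finset.mem_singleton] at this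
      have := nx.1.symm
      tauto
    · have : y ∈ ({v, x, w'} : Finset ℕ) := by rw [← h]; simp
      simp only [Finset.mem_insert, Finset.mem_singleton] at this
      rcases this with i | i | i
      · exact absurd i ny.1
      · exact absurd i.symm hxy
      · rw [← i] at hw'
        simp [Finset.insert_subset_iff, hxe, hw']
  have hBG : ∀ p ∈ B, ∀ e ∈ G, p ⊆ e ∨ ∀ x ∈ p, x ∉ e := by
    intro p hp e he
    by_cases h : ∃ x ∈ p, x ∈ e
    · obtain ⟨x, hx, hxe⟩ := h
      exact Or.inl (htw p hp e he x hx hxe)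
    · push Not at h; exact Or.inr h
  have hGG : Good G := hG.mono (Finset.filter_subset _ _)
  have hcovG : ∀ w ∈ W, ∃ e ∈ G, w ∈ e := by
    intro w hw
    obtain ⟨e, he, hwe, heW⟩ := hcov w hw
    exact ⟨e, (memG e).2 ⟨he, heW⟩, hwe⟩
  by_cases hA : ∃ w, w ∈ A1 ∨ w ∈ A2
  · have hEU4 : EU.card ≤ 4 := by
      obtain ⟨w, hw | hw⟩ := hA
      · obtain ⟨hwW, hwE⟩ := (memA1 w).1 hw
        obtain ⟨e, he, hwe, heW⟩ := hcov w hwW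
        exact EU4 hG hd he (hGU e ((memG e).2 ⟨he, heW⟩)) hwe hwE
      · obtain ⟨hwW, hwE⟩ := (memA2 w).1 hw
        obtain ⟨e, he, hwe, heW⟩ := hcov w hwW
        have := EU4 hG hd2 he (by rw [hUeq]; exact hGU e ((memG e).2 ⟨he, heW⟩)) hwe hwE
        rw [hUeq] at this
        exact this
    have m1 : ∀ s t w e, s ∉ W → t ∉ W → e ∈ G → w ∈ e → M1 {s, t, w} e w := by
      intro s t w e hs ht he hwe
      refine ⟨by simp, hwe, ?_⟩
      intro x hx hxe
      have hxW := ((memG e).1 he).2 hxe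
      simp only [Finset.mem_insert, Finset.mem_singleton] at hx
      rcases hx with rfl | rfl | rfl
      · exact absurd hxW hs
      · exact absurd hxW ht
      · rfl
    have naW : a ∉ W := fun h => (hWn a h).2.1 rfl
    have nbW : b ∉ W := fun h => (hWn b h).2.2.1 rfl
    have ncW : c ∉ W := fun h => (hWn c h).2.2.2.1 rfl
    have ndW : d ∉ W := fun h => (hWn d h).2.2.2.2 rfl
    have hAgen : ∀ s t w, s ∉ W → t ∉ W → ({s, t, w} : Finset ℕ) ∈ E → ∀ e ∈ G, ∀ g ∈ G,
        w ∈ e → w ∉ g → ∀ y, M1 e g y → False := by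
      intro s t w hs ht hE e he g hg hwe hwg y hy
      refine hG.2.1 _ hE e ((memG e).1 he).1 g ((memG g).1 hg).1 w y (m1 s t w e hs ht he hwe) hy ?_
      intro x hx hxg
      have hxW := ((memG g).1 hg).2 hxg
      simp only [Finset.mem_insert, Finset.mem_singleton] at hx
      rcases hx with rfl | rfl | rfl
      · exact hs hxW
      · exact ht hxW
      · exact hwg hxg
    have hconf : Conf G W A1 A2 B := by
      refine ⟨hGG, fun e he => ((memG e).1 he).2, Finset.filter_subset _ _,
        Finset.filter_subset _ _, ?_, ?_, ?_, ?_⟩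
      · rintro w (hw | hw)
        · exact hAgen a b w naW nbW ((memA1 w).1 hw).2
        · exact hAgen c d w ncW ndW ((memA2 w).1 hw).2
      · intro w hw w' hw' hne e he hwe hwe'
        obtain ⟨hwW, hwE⟩ := (memA1 w).1 hw
        obtain ⟨hwW', hwE'⟩ := (memA2 w').1 hw'
        have n1 := hWn w hwW
        have n2 := hWn w' hwW'
        have k := m1 c d w' e ncW ndW he hwe'
        refine hG.2.1 _ hwE e ((memG e).1 he).1 _ hwE' w w' (m1 a b w e naW nbW he hwe)
          ⟨k.2.1, k.1, fun x i j => k.2.2 x j i⟩ ?_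
        simp only [Finset.mem_insert, Finset.mem_singleton, forall_eq_or_imp, forall_eq, not_or]
        exact ⟨⟨ac, ad, n2.2.1.symm⟩, ⟨bc, bd, n2.2.2.1.symm⟩, n1.2.2.2.1, n1.2.2.2.2, hne⟩
      · intro p hp
        obtain ⟨⟨hpW, hp2⟩, hpE⟩ := (memB p).1 hp
        refine ⟨hp2, hpW, ?_, hBG p hp⟩
        intro x hx
        obtain ⟨y, hxy, rfl⟩ := two_of_mem hp2 hx
        have nx := hWn x (hpW hx)
        have ny := hWn y (hpW (by simp))
        clear hWn hW hV hcov hcr cross clsB hsub htw hBG hcovG hAgen m1 memG memB hGU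
        constructor
        · intro hxA
          obtain ⟨-, hxE⟩ := (memA1 x).1 hxA
          clear memA1 memA2
          refine hG.2.1 _ hxE _ hpE _ h2 x v ?_ ?_ ?_ <;>
            simp only [M1, Finset.mem_insert, Finset.mem_singleton, forall_eq_or_imp, forall_eq] <;>
            grind
        · intro hxA
          obtain ⟨-, hxE⟩ := (memA2 x).1 hxA
          clear memA1 memA2
          refine hG.2.1 _ hxE _ hpE _ h1 x v ?_ ?_ ?_ <;>
            simp only [M1, Finset.mem_insert, Finset.mem_singleton, forall_eq_or_imp, forall_eq] <;>
            grind
      · intro y hy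
        obtain ⟨e, he, hye⟩ := hcovG y hy
        exact pairdeg B e (hGG.1 e he) hye
          (fun p hp => ⟨((memB p).1 hp).1.2, fun hyp => htw p hp e he y hyp hye⟩)
    have hphi := phi W.card G W A1 A2 B hconf rfl
    have hbb : bb W.card = (W.card - 1).choose 2 + 5 := by
      unfold bb; rw [if_neg (by omega), if_neg (by omega)]
    omega
  · push Not at hA
    have z1 : A1.card = 0 := by
      rw [Finset.card_eq_zero]; exact Finset.eq_empty_of_forall_notMem (fun x => (hA x).1)
    have z2 : A2.card = 0 := by
      rw [Finset.card_eq_zero]; exact Finset.eq_empty_of_forall_notMem (fun x => (hA x).2)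
    have hBn : B.Nonempty := by
      obtain ⟨f, hf, ⟨u, hu, huU⟩, w, hw, hwW⟩ := hcr
      rcases cross f hf w hw hwW u hu huU with h | h | ⟨w', hw', hne, h⟩
      · exact absurd ((memA1 w).2 ⟨hwW, h ▸ hf⟩) (hA w).1
      · exact absurd ((memA2 w).2 ⟨hwW, h ▸ hf⟩) (hA w).2
      · exact ⟨_, clsB w w' hwW hw' hne (h ▸ hf)⟩
    have hlb := LB G W hGG (fun e he => ((memG e).1 he).2) hm hcovG B
      (fun p hp => ⟨((memB p).1 hp).1.2, ((memB p).1 hp).1.1, hBG p hp⟩) hBn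
    have hEU10 : EU.card ≤ 10 := by
      have hs : EU ⊆ ({v, a, b, c, d} : Finset ℕ).powersetCard 3 := by
        intro f hf
        obtain ⟨hf, hfU⟩ := Finset.mem_filter.1 hf
        exact Finset.mem_powersetCard.2 ⟨hfU, hG.1 f hf⟩
      refine le_trans (Finset.card_le_card hs) ?_
      rw [Finset.card_powersetCard]
      have : ({v, a, b, c, d} : Finset ℕ).card ≤ 5 := Finset.card_le_five
      exact le_trans (Nat.choose_le_choose 3 this) (by decide)
    omega

/-- Fact 2 (paper Fact 2): in the Setup with `n ≥ 13`, if `W₀ = ∅` and `H₁ ≠ ∅`,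
then `|H| < 10 + binom(n-6,2)`. Here the copy of `P₂ ∪ K₃` is given by the distinct
vertices `u0,…,u4` (with `u2` the degree-two vertex of `Q`), the edges
`{u0,u1,u2}, {u2,u3,u4}` and an edge `t` disjoint from `U = {u0,…,u4}`. -/
theorem fact_W0_empty (n : ℕ) (hn : 13 ≤ n) (H : ThreeGraph)
    (u0 u1 u2 u3 u4 : ℕ) (t : Finset ℕ)
    (hval : H.IsValid) (hcard : H.verts.card = n) (hconn : H.Connected)
    (hP : H.Free pathP) (hC : H.Free triangleC)
    (hdist : List.Pairwise (· ≠ ·) [u0, u1, u2, u3, u4])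
    (he1 : ({u0, u1, u2} : Finset ℕ) ∈ H.edges)
    (he2 : ({u2, u3, u4} : Finset ℕ) ∈ H.edges)
    (ht : t ∈ H.edges) (htdisj : Disjoint t ({u0, u1, u2, u3, u4} : Finset ℕ))
    (hW0 : W0set H {u0, u1, u2, u3, u4} = ∅)
    (hH1 : (H1set H {u0, u1, u2, u3, u4}).Nonempty) :
    H.edges.card < 10 + (n - 6).choose 2 := by
  have hG := good_of_free H hval hP hC
  have hUeq : ({u2, u0, u1, u3, u4} : Finset ℕ) = {u0, u1, u2, u3, u4} := by
    ext x; simp; tauto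
  have hd : List.Pairwise (· ≠ ·) [u2, u0, u1, u3, u4] := by
    simp at hdist ⊢; grind
  have hUV : ({u0, u1, u2, u3, u4} : Finset ℕ) ⊆ H.verts := by
    have i1 := (hval _ he1).2
    have i2 := (hval _ he2).2
    simp only [Finset.insert_subset_iff, Finset.singleton_subset_iff] at i1 i2 ⊢
    tauto
  have hUc : ({u0, u1, u2, u3, u4} : Finset ℕ).card = 5 := by
    simp at hdist
    rw [Finset.card_insert_of_notMem (by simp; tauto), Finset.card_insert_of_notMem (by simp; tauto),
      Finset.card_insert_of_notMem (by simp; tauto), Finset.card_pair (by tauto)]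
  set U : Finset ℕ := {u0, u1, u2, u3, u4} with hU
  have hWc : (Wset H U).card = n - 5 := by
    unfold Wset
    rw [Finset.card_sdiff_of_subset hUV, hcard, hUc]
  have hm := main_aux hG hd (by rw [← rot3]; exact he1) he2 (Wset H U)
    (by rw [hUeq]; exact fun x hx => (Finset.mem_sdiff.1 hx).2) (by omega)
    (by
      rw [hUeq]
      intro f hf x hx
      by_cases h : x ∈ U
      · exact Or.inl h
      · exact Or.inr (Finset.mem_sdiff.2 ⟨(hval f hf).2 hx, h⟩))
    (by
      intro w hw
      by_contra hcon
      push Not at hcon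
      have : w ∈ W0set H U := Finset.mem_filter.2 ⟨hw, fun e he heW hwe => hcon e he hwe heW⟩
      rw [hW0] at this
      simp at this)
    (by
      rw [hUeq]
      obtain ⟨f, hf⟩ := hH1
      obtain ⟨hf, ⟨u, hu⟩, ⟨w, hw⟩⟩ := Finset.mem_filter.1 hf
      refine ⟨f, hf, ⟨u, Finset.mem_inter.1 hu⟩, w, (Finset.mem_inter.1 hw).1, ?_⟩
      exact (Finset.mem_sdiff.1 (Finset.mem_inter.1 hw).2).1)
  rw [hWc, show n - 5 - 1 = n - 6 by omega] at hm
  exact hm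
end

section
/- Let n ≥ 13 and let H be as in the Setup (a connected {P,C}-free 3-graph on n vertices containing a copy of P_2 ∪ K_3, with U, W_0, W_1 and H_1 defined from a fixed such copy). If H_1 ≠ ∅, H is not contained in the comet Co(n), and |W_1| = 3, then |H| < 10 + binom(n−6, 2). -/
/-- The local configuration extracted from the Setup. -/
structure Conf_s14 (E : Finset (Finset ℕ)) (t W : Finset ℕ) (p q x r s : ℕ) : Prop where
  card3 : ∀ e ∈ E, e.card = 3
  path : ∀ e₁ ∈ E, ∀ e₂ ∈ E, ∀ e₃ ∈ E, ∀ c d, c ∈ e₁ → c ∈ e₂ → d ∈ e₂ → d ∈ e₃ →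
    (∀ v ∈ e₁, v ∉ e₃) → (∀ v ∈ e₁, v ∈ e₂ → v = c) → (∀ v ∈ e₂, v ∈ e₃ → v = d) → False
  tri : ∀ e₁ ∈ E, ∀ e₂ ∈ E, ∀ e₃ ∈ E, ∀ a b c, a ∈ e₁ → a ∈ e₂ → b ∈ e₂ → b ∈ e₃ →
    c ∈ e₃ → c ∈ e₁ → a ≠ b →
    (∀ v ∈ e₁, v ∈ e₂ → v = a) → (∀ v ∈ e₂, v ∈ e₃ → v = b) →
    (∀ v ∈ e₃, v ∈ e₁ → v = c) → False
  nd : p ≠ q ∧ p ≠ x ∧ p ≠ r ∧ p ≠ s ∧ q ≠ x ∧ q ≠ r ∧ q ≠ s ∧ x ≠ r ∧ x ≠ s ∧ r ≠ s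
  e1 : ({x, p, q} : Finset ℕ) ∈ E
  e2 : ({x, r, s} : Finset ℕ) ∈ E
  ht : t ∈ E
  cov : ∀ e ∈ E, ∀ v ∈ e, v ∈ t ∨ v ∈ W ∨ v = p ∨ v = q ∨ v = x ∨ v = r ∨ v = s
  tU : ∀ v ∈ t, v ∉ W ∧ v ≠ p ∧ v ≠ q ∧ v ≠ x ∧ v ≠ r ∧ v ≠ s
  WU : ∀ v ∈ W, v ≠ p ∧ v ≠ q ∧ v ≠ x ∧ v ≠ r ∧ v ≠ s
  only : ∀ e ∈ E, p ∉ e → q ∉ e → x ∉ e → r ∉ e → s ∉ e → e = t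

lemma three_of_mem_s14 {e : Finset ℕ} (h : e.card = 3) {p : ℕ} (hp : p ∈ e) :
    ∃ y z, y ≠ z ∧ p ≠ y ∧ p ≠ z ∧ e = {p, y, z} := by
  have h2 : (e.erase p).card = 2 := by rw [Finset.card_erase_of_mem hp, h]
  obtain ⟨y, z, hyz, h3⟩ := Finset.card_eq_two.1 h2
  refine ⟨y, z, hyz, ?_, ?_, ?_⟩
  · rintro rfl; have : p ∈ e.erase p := by rw [h3]; simp
    simp at this
  · rintro rfl; have : p ∈ e.erase p := by rw [h3]; simp
    simp at this
  · rw [← Finset.insert_erase hp, h3]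

lemma three_of_mem2_s14 {e : Finset ℕ} (h : e.card = 3) {p q : ℕ} (hp : p ∈ e) (hq : q ∈ e)
    (hpq : p ≠ q) : ∃ z, p ≠ z ∧ q ≠ z ∧ e = {p, q, z} := by
  obtain ⟨y, z, hyz, hy, hz, rfl⟩ := three_of_mem_s14 h hp
  simp only [Finset.mem_insert, Finset.mem_singleton] at hq
  rcases hq with rfl | rfl | rfl
  · exact absurd rfl hpq
  · exact ⟨z, hz, hyz, rfl⟩
  · exact ⟨y, hy, hyz.symm, by rw [Finset.pair_comm]⟩

lemma mem_link {x y z : ℕ} {S : Finset ℕ} (h : y ≠ z) (hy : y ∈ S) (hz : z ∈ S) :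
    ({x, y, z} : Finset ℕ) ∈ (S.powersetCard 2).image (insert x) := by
  refine Finset.mem_image.2 ⟨{y, z}, ?_, rfl⟩
  rw [Finset.mem_powersetCard]
  refine ⟨?_, Finset.card_pair h⟩
  intro v hv; simp only [Finset.mem_insert, Finset.mem_singleton] at hv
  rcases hv with rfl | rfl <;> assumption

lemma card_link (x : ℕ) (S : Finset ℕ) :
    ((S.powersetCard 2).image (insert x)).card ≤ S.card.choose 2 :=
  Finset.card_image_le.trans (by rw [Finset.card_powersetCard])

lemma choose_two_succ (m : ℕ) : (m + 1).choose 2 = m + m.choose 2 := by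
  rw [Nat.choose_succ_succ' m 1, Nat.choose_one_right]

lemma card_union_le_of {A B : Finset (Finset ℕ)} {a b : ℕ} (hA : A.card ≤ a) (hB : B.card ≤ b) :
    (A ∪ B).card ≤ a + b := (Finset.card_union_le A B).trans (by omega)

lemma card_three_le' (a b c : Finset ℕ) : ({a, b, c} : Finset (Finset ℕ)).card ≤ 3 :=
  Finset.card_le_three

namespace Conf_s14
variable {E : Finset (Finset ℕ)} {t W : Finset ℕ} {p q x r s : ℕ}

lemma symm (C : Conf_s14 E t W p q x r s) : Conf_s14 E t W r s x p q where
  card3 := C.card3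
  path := C.path
  tri := C.tri
  nd := by have := C.nd; grind
  e1 := C.e2
  e2 := C.e1
  ht := C.ht
  cov := by intro e he v hv; have := C.cov e he v hv; tauto
  tU := by intro v hv; have := C.tU v hv; tauto
  WU := by intro v hv; have := C.WU v hv; tauto
  only := fun e he h1 h2 h3 h4 h5 => C.only e he h4 h5 h3 h1 h2

lemma swap (C : Conf_s14 E t W p q x r s) : Conf_s14 E t W q p x r s where
  card3 := C.card3
  path := C.path
  tri := C.tri
  nd := by have := C.nd; grind
  e1 := by rw [Finset.pair_comm]; exact C.e1
  e2 := C.e2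
  ht := C.ht
  cov := by intro e he v hv; have := C.cov e he v hv; tauto
  tU := by intro v hv; have := C.tU v hv; tauto
  WU := by intro v hv; have := C.WU v hv; tauto
  only := fun e he h1 h2 h3 h4 h5 => C.only e he h2 h1 h3 h4 h5

lemma F1a (C : Conf_s14 E t W p q x r s) {e} (he : e ∈ E) (hx : x ∉ e) (hp : p ∈ e) (hq : q ∉ e) :
    r ∈ e ∧ s ∈ e := by
  have nd := C.nd
  by_cases hr : r ∈ e <;> by_cases hs : s ∈ e
  · exact ⟨hr, hs⟩
  · exact (C.tri e he _ C.e1 _ C.e2 p x r hp (by simp) (by simp) (by simp) (by simp) hr nd.2.1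
      (by grind) (by grind) (by grind)).elim
  · exact (C.tri e he _ C.e1 _ C.e2 p x s hp (by simp) (by simp) (by simp) (by simp) hs nd.2.1
      (by grind) (by grind) (by grind)).elim
  · exact (C.path e he _ C.e1 _ C.e2 p x hp (by simp) (by simp) (by simp)
      (by grind) (by grind) (by grind)).elim

lemma F1 (C : Conf_s14 E t W p q x r s) {e} (he : e ∈ E) (hx : x ∉ e) (hne : e ≠ t) :
    (p ∈ e ∧ q ∈ e) ∨ (r ∈ e ∧ s ∈ e) := by
  have h1 := C.F1a he hx
  have h2 := C.swap.F1a he hx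
  have h3 := C.symm.F1a he hx
  have h4 := C.symm.swap.F1a he hx
  have h5 := C.only e he
  tauto

/-- An edge through `x` meeting `t` lies in `t ∪ {x}`. -/
lemma F2 (C : Conf_s14 E t W p q x r s) {e} (he : e ∈ E) (hx : x ∈ e) {w} (hw : w ∈ t) (hwe : w ∈ e) :
    ∃ y ∈ t, y ≠ w ∧ e = {x, w, y} := by
  have nd := C.nd
  have hU := C.tU
  obtain ⟨y, hxy, hwy, rfl⟩ := three_of_mem2_s14 (C.card3 e he) hx hwe (by grind)
  by_cases hy : y ∈ t
  · exact ⟨y, hy, hwy.symm, rfl⟩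
  exfalso
  by_cases h : y = p ∨ y = q
  · exact C.path t C.ht _ he _ C.e2 w x hw hwe hx (by simp) (by grind) (by grind) (by grind)
  · exact C.path t C.ht _ he _ C.e1 w x hw hwe hx (by simp) (by grind) (by grind) (by grind)

/-- Classification of edges meeting `t`. -/
lemma F3 (C : Conf_s14 E t W p q x r s) {e} (he : e ∈ E) {w} (hw : w ∈ t) (hwe : w ∈ e) :
    e = t ∨ (∃ y ∈ t, y ≠ w ∧ e = {x, w, y}) ∨ e = {p, q, w} ∨ e = {r, s, w} := by
  by_cases hx : x ∈ e
  · exact Or.inr (Or.inl (C.F2 he hx hw hwe))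
  by_cases hne : e = t
  · exact Or.inl hne
  have hU := C.tU w hw
  rcases C.F1 he hx hne with ⟨h1, h2⟩ | ⟨h1, h2⟩
  · obtain ⟨z, -, -, rfl⟩ := three_of_mem2_s14 (C.card3 e he) h1 h2 C.nd.1
    grind
  · obtain ⟨z, -, -, rfl⟩ := three_of_mem2_s14 (C.card3 e he) h1 h2 C.symm.nd.1
    grind

lemma BB (C : Conf_s14 E t W p q x r s) {w w'} (hw : w ∈ t) (hw' : w' ∈ t)
    (h : ({p, q, w} : Finset ℕ) ∈ E) (h' : ({r, s, w'} : Finset ℕ) ∈ E) : w = w' := by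
  by_contra hne
  have nd := C.nd
  have hU := C.tU
  exact C.path _ h t C.ht _ h' w w' (by simp) hw hw' (by simp) (by grind) (by grind) (by grind)

lemma AB (C : Conf_s14 E t W p q x r s) {w w'} (hw : w ∈ t) (hw' : w' ∈ t) (_ : w' ≠ w)
    (h : ({p, q, w} : Finset ℕ) ∈ E) (h' : ({x, w, w'} : Finset ℕ) ∈ E) : False := by
  have nd := C.nd
  have hU := C.tU
  exact C.path _ h _ h' _ C.e2 w x (by simp) (by simp) (by simp) (by simp)
    (by grind) (by grind) (by grind)

lemma T4a (C : Conf_s14 E t W p q x r s) {c} (hc : c ∈ t) (h : ({p, q, c} : Finset ℕ) ∈ E) :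
    (E.filter (fun e => ∃ w ∈ t, w ∈ e)).card ≤ 4 := by
  have tc := C.card3 t C.ht
  by_cases hw : ∃ w ∈ t, w ≠ c ∧ ({p, q, w} : Finset ℕ) ∈ E
  · obtain ⟨w, hw, hwc, hE⟩ := hw
    have hsub : E.filter (fun e => ∃ w ∈ t, w ∈ e) ⊆ {t} ∪ t.image (fun v => {p, q, v}) := by
      intro e he
      obtain ⟨he, v, hv, hve⟩ := Finset.mem_filter.1 he
      rw [Finset.mem_union, Finset.mem_singleton, Finset.mem_image]
      rcases C.F3 he hv hve with h0 | ⟨y, hy, hyv, rfl⟩ | h0 | h0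
      · exact Or.inl h0
      · exfalso
        have h1 : v ≠ c := by rintro rfl; exact C.AB hv hy hyv h he
        have h2 : v ≠ w := by rintro rfl; exact C.AB hv hy hyv hE he
        have he' : ({x, y, v} : Finset ℕ) ∈ E := by rw [Finset.pair_comm]; exact he
        have h3 : y ≠ c := by rintro rfl; exact C.AB hy hv hyv.symm h he'
        have h4 : y ≠ w := by rintro rfl; exact C.AB hy hv hyv.symm hE he'
        have h5 : ({c, w, v, y} : Finset ℕ) ⊆ t := by intro a; grind
        have h6 := Finset.card_le_card h5
        have h7 : ({c, w, v, y} : Finset ℕ).card = 4 := by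
          rw [Finset.card_insert_of_notMem, Finset.card_insert_of_notMem, Finset.card_pair] <;> grind
        omega
      · exact Or.inr ⟨v, hv, h0.symm⟩
      · subst h0
        have := C.BB hc hv h he
        have := C.BB hw hv hE he
        grind
    refine (Finset.card_le_card hsub).trans ?_
    exact card_union_le_of (a := 1) (b := 3) (by simp) (tc ▸ Finset.card_image_le)
  · push Not at hw
    have hsub : E.filter (fun e => ∃ w ∈ t, w ∈ e) ⊆
        {t, insert x (t.erase c), {p, q, c}, {r, s, c}} := by
      intro e he
      obtain ⟨he, v, hv, hve⟩ := Finset.mem_filter.1 he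
      simp only [Finset.mem_insert, Finset.mem_singleton]
      rcases C.F3 he hv hve with h0 | ⟨y, hy, hyv, rfl⟩ | h0 | h0
      · exact Or.inl h0
      · right; left
        have h1 : v ≠ c := by rintro rfl; exact C.AB hv hy hyv h he
        have he' : ({x, y, v} : Finset ℕ) ∈ E := by rw [Finset.pair_comm]; exact he
        have h3 : y ≠ c := by rintro rfl; exact C.AB hy hv hyv.symm h he'
        congr 1
        apply Finset.eq_of_subset_of_card_le
        · intro a; grind
        · rw [Finset.card_erase_of_mem hc, tc, Finset.card_pair hyv.symm]
      · subst h0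
        by_cases hvc : v = c
        · subst hvc; simp
        · exact absurd he (hw v hv hvc)
      · subst h0
        have := C.BB hc hv h he
        subst this; simp
    refine (Finset.card_le_card hsub).trans Finset.card_le_four

/-- At most four edges meet `t`. -/
lemma T4 (C : Conf_s14 E t W p q x r s) : (E.filter (fun e => ∃ w ∈ t, w ∈ e)).card ≤ 4 := by
  by_cases h1 : ∃ c ∈ t, ({p, q, c} : Finset ℕ) ∈ E
  · obtain ⟨c, hc, h⟩ := h1; exact C.T4a hc h
  by_cases h2 : ∃ c ∈ t, ({r, s, c} : Finset ℕ) ∈ E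
  · obtain ⟨c, hc, h⟩ := h2; exact C.symm.T4a hc h
  push Not at h1 h2
  have hsub : E.filter (fun e => ∃ w ∈ t, w ∈ e) ⊆ {t} ∪ (t.powersetCard 2).image (insert x) := by
    intro e he
    obtain ⟨he, v, hv, hve⟩ := Finset.mem_filter.1 he
    rw [Finset.mem_union, Finset.mem_singleton]
    rcases C.F3 he hv hve with h0 | ⟨y, hy, hyv, rfl⟩ | h0 | h0
    · exact Or.inl h0
    · exact Or.inr (mem_link hyv.symm hv hy)
    · subst h0; exact absurd he (h1 v hv)
    · subst h0; exact absurd he (h2 v hv)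
  refine (Finset.card_le_card hsub).trans ?_
  refine card_union_le_of (a := 1) (b := 3) (by simp) ((card_link x t).trans ?_)
  rw [C.card3 t C.ht]; decide

lemma card_rsW (C : Conf_s14 E t W p q x r s) : (insert r (insert s W)).card = W.card + 2 := by
  have hW := C.WU
  have nd := C.nd
  rw [Finset.card_insert_of_notMem, Finset.card_insert_of_notMem] <;> grind

lemma clsB (C : Conf_s14 E t W p q x r s) {c} (hc : c ∈ t)
    (h : ({p, q, c} : Finset ℕ) ∈ E) : ∀ e ∈ E, (∀ w ∈ t, w ∉ e) →
      e ∈ ({{x, p, q}, {p, q, r}, {p, q, s}} : Finset (Finset ℕ)) ∨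
      (∃ w ∈ W, e = {p, q, w}) ∨ (∃ w ∈ W, e = {r, s, w}) ∨
      (∃ y z, y ≠ z ∧ y ∈ insert r (insert s W) ∧ z ∈ insert r (insert s W) ∧ e = {x, y, z}) := by
  have nd := C.nd
  have hU := C.tU
  have hpq : ∀ e ∈ E, (∀ w ∈ t, w ∉ e) → (p ∈ e ↔ q ∈ e) := by
    intro e he hd
    constructor
    · intro hp; by_contra hq
      exact C.path t C.ht _ h e he c p hc (by simp) (by simp) hp (by grind) (by grind) (by grind)
    · intro hp; by_contra hq
      exact C.path t C.ht _ h e he c q hc (by simp) (by simp) hp (by grind) (by grind) (by grind)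
  intro e he hd
  have h1 := hpq e he hd
  have cov := C.cov e he
  by_cases hx : x ∈ e
  · by_cases hp : p ∈ e
    · left
      obtain ⟨z, -, -, rfl⟩ := three_of_mem2_s14 (C.card3 e he) hx hp (by grind)
      have : q = z := by grind
      subst this; simp
    · right; right; right
      obtain ⟨y, z, hyz, hxy, hxz, rfl⟩ := three_of_mem_s14 (C.card3 e he) hx
      have hy := cov y (by simp)
      have hz := cov z (by simp)
      have hy' := hd y
      have hz' := hd z
      exact ⟨y, z, hyz, by grind, by grind, rfl⟩
  · rcases C.F1 he hx (by rintro rfl; exact hd c hc hc) with ⟨ha, hb⟩ | ⟨ha, hb⟩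
    · obtain ⟨z, h2, h3, rfl⟩ := three_of_mem2_s14 (C.card3 e he) ha hb C.nd.1
      have hz := cov z (by simp)
      have hz' := hd z
      have : z ∈ W ∨ z = r ∨ z = s := by grind
      rcases this with h | rfl | rfl
      · right; left; exact ⟨z, h, rfl⟩
      · simp
      · simp
    · obtain ⟨z, h2, h3, rfl⟩ := three_of_mem2_s14 (C.card3 e he) ha hb C.symm.nd.1
      have hz := cov z (by simp)
      have hz' := hd z
      have : z ∈ W := by grind
      right; right; left; exact ⟨z, this, rfl⟩

lemma keyB2 (C : Conf_s14 E t W p q x r s) {w} (hw : w ∈ W) (hE : ({r, s, w} : Finset ℕ) ∈ E) :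
    ∀ y z, y ∈ ({r, s, w} : Finset ℕ) → z ∉ ({r, s, w} : Finset ℕ) → z ∈ W →
            ({x, y, z} : Finset ℕ) ∈ E → False := by
  have nd := C.nd
  have hWU := C.WU
  intro y z hy hz hzW hE'
  exact C.path _ hE _ hE' _ C.e1 y x hy (by simp) (by simp) (by simp)
    (by grind) (by grind) (by grind)

lemma keyB1 (C : Conf_s14 E t W p q x r s) {w} (hw : w ∈ W) (hE : ({p, q, w} : Finset ℕ) ∈ E) :
    ∀ z ∈ W, z ≠ w → ({x, w, z} : Finset ℕ) ∈ E → False := by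
  have nd := C.nd
  have hWU := C.WU
  intro z hz hzW hE'
  exact C.path _ hE _ hE' _ C.e2 w x (by simp) (by simp) (by simp) (by simp)
    (by grind) (by grind) (by grind)

set_option maxHeartbeats 1000000 in
/-- Bound on edges avoiding `t` when some edge `{p,q,c}`, `c ∈ t`, is present. -/
lemma caseB (C : Conf_s14 E t W p q x r s) (hm : 1 ≤ W.card) {c} (hc : c ∈ t)
    (h : ({p, q, c} : Finset ℕ) ∈ E) :
    (E.filter (fun e => ¬ ∃ w ∈ t, w ∈ e)).card ≤ W.card.choose 2 + 2 * W.card + 6 := by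
  have nd := C.nd
  have hU := C.tU
  have hWU := C.WU
  have crs := C.card_rsW
  have cls := C.clsB hc h
  clear h hc
  by_cases hS2 : ∃ w ∈ W, ({r, s, w} : Finset ℕ) ∈ E
  · obtain ⟨w, hw, hE⟩ := hS2
    have hsub : E.filter (fun e => ¬ ∃ w ∈ t, w ∈ e) ⊆
        {{x, p, q}, {p, q, r}, {p, q, s}} ∪ W.image (fun v => {p, q, v}) ∪
        W.image (fun v => {r, s, v}) ∪ (W.powersetCard 2).image (insert x) ∪
        {{x, r, s}, {x, r, w}, {x, s, w}} := by
      intro e he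
      obtain ⟨he, hd⟩ := Finset.mem_filter.1 he
      push Not at hd
      simp only [Finset.mem_union]
      rcases cls e he hd with h0 | ⟨v, hv, h0⟩ | ⟨v, hv, h0⟩ | ⟨y, z, hyz, hy, hz, h0⟩
      · simp only [h0, true_or]
      · left; left; left; right; exact Finset.mem_image.2 ⟨v, hv, h0.symm⟩
      · left; left; right; exact Finset.mem_image.2 ⟨v, hv, h0.symm⟩
      · -- paths {r,s,w}, {x,r,y}, {x,p,q}
        have key := C.keyB2 hw hE
        have k1 := key y z
        have k2 := key z y
        clear cls
        have he' : ({x, z, y} : Finset ℕ) ∈ E := by rw [Finset.pair_comm, ← h0]; exact he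
        subst h0
        by_cases hyW : y ∈ W <;> by_cases hzW : z ∈ W
        · left; right; exact mem_link hyz hyW hzW
        · right
          have : z = r ∨ z = s := by grind
          have : y = w := by grind
          subst this
          rw [Finset.pair_comm y z]
          rcases ‹z = r ∨ z = s› with rfl | rfl <;> simp
        · right
          have : y = r ∨ y = s := by grind
          have : z = w := by grind
          subst this
          rcases ‹y = r ∨ y = s› with rfl | rfl <;> simp
        · right
          have : (y = r ∧ z = s) ∨ (y = s ∧ z = r) := by grind
          rcases this with ⟨rfl, rfl⟩ | ⟨rfl, rfl⟩
          · simp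
          · rw [Finset.pair_comm]; simp
    refine (Finset.card_le_card hsub).trans ?_
    have := card_union_le_of (card_union_le_of (card_union_le_of (card_union_le_of
      (card_three_le' {x, p, q} {p, q, r} {p, q, s})
      (Finset.card_image_le (s := W) (f := fun v => ({p, q, v} : Finset ℕ))))
      (Finset.card_image_le (s := W) (f := fun v => ({r, s, v} : Finset ℕ))))
      (card_link x W)) (card_three_le' {x, r, s} {x, r, w} {x, s, w})
    omega
  by_cases hS1 : ∃ w ∈ W, ({p, q, w} : Finset ℕ) ∈ E
  · obtain ⟨w, hw, hE⟩ := hS1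
    have hsub : E.filter (fun e => ¬ ∃ w ∈ t, w ∈ e) ⊆
        {{x, p, q}, {p, q, r}, {p, q, s}} ∪ W.image (fun v => {p, q, v}) ∪
        (((insert r (insert s W)).erase w).powersetCard 2).image (insert x) ∪
        {{x, r, w}, {x, s, w}} := by
      intro e he
      obtain ⟨he, hd⟩ := Finset.mem_filter.1 he
      push Not at hd
      simp only [Finset.mem_union]
      rcases cls e he hd with h0 | ⟨v, hv, h0⟩ | ⟨v, hv, h0⟩ | ⟨y, z, hyz, hy, hz, h0⟩
      · simp only [h0, true_or]
      · left; left; right; exact Finset.mem_image.2 ⟨v, hv, h0.symm⟩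
      · subst h0; exact absurd ⟨v, hv, he⟩ hS2
      · have key := C.keyB1 hw hE
        clear cls
        have he' : ({x, z, y} : Finset ℕ) ∈ E := by rw [Finset.pair_comm, ← h0]; exact he
        subst h0
        by_cases hyw : y = w
        · subst hyw
          have k := key z
          right
          have : z = r ∨ z = s := by grind
          rw [Finset.pair_comm y z]
          rcases this with rfl | rfl <;> simp
        by_cases hzw : z = w
        · subst hzw
          have k := key y
          right
          have : y = r ∨ y = s := by grind
          rcases this with rfl | rfl <;> simp
        · left; right; exact mem_link hyz (by grind) (by grind)
    refine (Finset.card_le_card hsub).trans ?_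
    have := card_union_le_of (card_union_le_of (card_union_le_of
      (card_three_le' {x, p, q} {p, q, r} {p, q, s})
      (Finset.card_image_le (s := W) (f := fun v => ({p, q, v} : Finset ℕ))))
      (card_link x ((insert r (insert s W)).erase w)))
      (Finset.card_le_two (a := ({x, r, w} : Finset ℕ)) (b := {x, s, w}))
    have h2 : ((insert r (insert s W)).erase w).card = W.card + 1 := by
      rw [Finset.card_erase_of_mem (by grind), crs]; omega
    rw [h2, choose_two_succ] at this
    omega
  · have hsub : E.filter (fun e => ¬ ∃ w ∈ t, w ∈ e) ⊆
        {{x, p, q}, {p, q, r}, {p, q, s}} ∪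
        ((insert r (insert s W)).powersetCard 2).image (insert x) := by
      intro e he
      obtain ⟨he, hd⟩ := Finset.mem_filter.1 he
      push Not at hd
      simp only [Finset.mem_union]
      rcases cls e he hd with h0 | ⟨v, hv, h0⟩ | ⟨v, hv, h0⟩ | ⟨y, z, hyz, hy, hz, h0⟩
      · simp only [h0, true_or]
      · subst h0; exact absurd ⟨v, hv, he⟩ hS1
      · subst h0; exact absurd ⟨v, hv, he⟩ hS2
      · subst h0; right; exact mem_link hyz hy hz
    refine (Finset.card_le_card hsub).trans ?_
    have := card_union_le_of (card_three_le' {x, p, q} {p, q, r} {p, q, s})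
      (card_link x (insert r (insert s W)))
    rw [crs, choose_two_succ, choose_two_succ] at this
    omega

/-- In case A, an edge through `x` avoiding `t` never meets `f` in exactly one vertex. -/
lemma A1 (C : Conf_s14 E t W p q x r s) {a b} (ha : a ∈ t) (hb : b ∈ t)
    (h : ({x, a, b} : Finset ℕ) ∈ E) {f e} (hf : f ∈ E) (hxf : x ∉ f) (hft : ∀ w ∈ t, w ∉ f)
    (he : e ∈ E) (hx : x ∈ e) (het : ∀ w ∈ t, w ∉ e) {u} (huf : u ∈ f) (hue : u ∈ e) :
    ∃ v ∈ f, v ∈ e ∧ v ≠ u := by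
  by_contra hcon
  push Not at hcon
  have := het a ha
  have := het b hb
  have := hft a ha
  have := hft b hb
  exact C.path f hf e he _ h u x huf hue hx (by simp) (by grind) (by grind) (by grind)

lemma A2 (C : Conf_s14 E t W p q x r s) {a b} (ha : a ∈ t) (hb : b ∈ t)
    (h : ({x, a, b} : Finset ℕ) ∈ E) {f} (hf : f ∈ E) (hxf : x ∉ f) (hft : ∀ w ∈ t, w ∉ f) :
    (∃ w ∈ W, f = {p, q, w}) ∨ (∃ w ∈ W, f = {r, s, w}) := by
  have nd := C.nd
  have hU := C.tU
  have cov := C.cov f hf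
  have ne : f ≠ t := by rintro rfl; exact hft a ha ha
  have k1 := fun u => C.A1 ha hb h hf hxf hft C.e1 (by simp) (by grind) (u := u)
  have k2 := fun u => C.A1 ha hb h hf hxf hft C.e2 (by simp) (by grind) (u := u)
  rcases C.F1 hf hxf ne with ⟨h1, h2⟩ | ⟨h1, h2⟩
  · obtain ⟨z, h3, h4, rfl⟩ := three_of_mem2_s14 (C.card3 f hf) h1 h2 C.nd.1
    left
    refine ⟨z, ?_, rfl⟩
    have hz := cov z (by simp)
    have hz' := hft z
    have k := k2 z (by simp)
    grind
  · obtain ⟨z, h3, h4, rfl⟩ := three_of_mem2_s14 (C.card3 f hf) h1 h2 C.symm.nd.1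
    right
    refine ⟨z, ?_, rfl⟩
    have hz := cov z (by simp)
    have hz' := hft z
    have k := k1 z (by simp)
    grind

/-- An edge `{x,y,z}` meeting `{p,q,w}` in zero or two vertices. -/
lemma A3 {w y z : ℕ}
    (h : ∀ u, u ∈ ({p, q, w} : Finset ℕ) → u ∈ ({x, y, z} : Finset ℕ) →
      ∃ v ∈ ({p, q, w} : Finset ℕ), v ∈ ({x, y, z} : Finset ℕ) ∧ v ≠ u)
    (hx : x ∉ ({p, q, w} : Finset ℕ)) (hyz : y ≠ z) :
    ({x, y, z} : Finset ℕ) ∈ ({{x, p, q}, {x, p, w}, {x, q, w}} : Finset (Finset ℕ)) ∨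
    (y ∉ ({p, q, w} : Finset ℕ) ∧ z ∉ ({p, q, w} : Finset ℕ)) := by
  by_cases hy : y ∈ ({p, q, w} : Finset ℕ)
  · left
    obtain ⟨v, hv, hv', hvu⟩ := h y hy (by simp)
    have : v = z := by grind
    subst this
    simp only [Finset.mem_insert, Finset.mem_singleton] at hy hv ⊢
    rcases hy with rfl | rfl | rfl <;> rcases hv with rfl | rfl | rfl <;>
      first
      | exact absurd rfl hvu
      | simp
      | (rw [Finset.pair_comm]; simp)
  · by_cases hz : z ∈ ({p, q, w} : Finset ℕ)
    · obtain ⟨v, hv, hv', hvu⟩ := h z hz (by simp)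
      exfalso; grind
    · exact Or.inr ⟨hy, hz⟩

lemma caseA3 (C : Conf_s14 E t W p q x r s) {a b} (ha : a ∈ t) (hb : b ∈ t)
    (h : ({x, a, b} : Finset ℕ) ∈ E) {w w'} (hw : w ∈ W) (hw' : w' ∈ W)
    (hE : ({p, q, w} : Finset ℕ) ∈ E) (hE' : ({r, s, w'} : Finset ℕ) ∈ E) :
    (E.filter (fun e => ¬ ∃ w ∈ t, w ∈ e)).card ≤ W.card.choose 2 + 2 * W.card + 6 := by
  have nd := C.nd
  have hU := C.tU
  have hWU := C.WU
  have hsub : E.filter (fun e => ¬ ∃ w ∈ t, w ∈ e) ⊆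
      {{x, p, q}, {x, p, w}, {x, q, w}} ∪ {{x, r, s}, {x, r, w'}, {x, s, w'}} ∪
      W.image (fun v => {p, q, v}) ∪ W.image (fun v => {r, s, v}) ∪
      (W.powersetCard 2).image (insert x) := by
    intro e he
    obtain ⟨he, hd⟩ := Finset.mem_filter.1 he
    push Not at hd
    simp only [Finset.mem_union]
    by_cases hx : x ∈ e
    · have k1 := fun u => C.A1 ha hb h hE (by grind) (by grind) he hx hd (u := u)
      have k2 := fun u => C.A1 ha hb h hE' (by grind) (by grind) he hx hd (u := u)
      have cov := C.cov e he
      obtain ⟨y, z, hyz, hxy, hxz, rfl⟩ := three_of_mem_s14 (C.card3 e he) hx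
      rcases A3 k1 (by grind) hyz with h1 | ⟨h1, h2⟩
      · simp only [h1, true_or]
      rcases A3 k2 (by grind) hyz with h3 | ⟨h3, h4⟩
      · simp only [h3, true_or, or_true]
      right
      have hy := cov y (by simp)
      have hz := cov z (by simp)
      have hy' := hd y
      have hz' := hd z
      exact mem_link hyz (by grind) (by grind)
    · rcases C.A2 ha hb h he hx hd with ⟨v, hv, h0⟩ | ⟨v, hv, h0⟩
      · left; left; right; exact Finset.mem_image.2 ⟨v, hv, h0.symm⟩
      · left; right; exact Finset.mem_image.2 ⟨v, hv, h0.symm⟩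
  refine (Finset.card_le_card hsub).trans ?_
  have := card_union_le_of (card_union_le_of (card_union_le_of (card_union_le_of
      (card_three_le' {x, p, q} {x, p, w} {x, q, w})
      (card_three_le' {x, r, s} {x, r, w'} {x, s, w'}))
      (Finset.card_image_le (s := W) (f := fun v => ({p, q, v} : Finset ℕ))))
      (Finset.card_image_le (s := W) (f := fun v => ({r, s, v} : Finset ℕ))))
      (card_link x W)
  omega

lemma caseA2 (C : Conf_s14 E t W p q x r s) {a b} (ha : a ∈ t) (hb : b ∈ t)
    (h : ({x, a, b} : Finset ℕ) ∈ E) {w} (hw : w ∈ W)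
    (hE : ({p, q, w} : Finset ℕ) ∈ E) :
    (E.filter (fun e => ¬ ∃ w ∈ t, w ∈ e)).card ≤ W.card.choose 2 + 2 * W.card + 6 := by
  by_cases hE' : ∃ w' ∈ W, ({r, s, w'} : Finset ℕ) ∈ E
  · obtain ⟨w', hw', hE'⟩ := hE'
    exact C.caseA3 ha hb h hw hw' hE hE'
  have nd := C.nd
  have hU := C.tU
  have hWU := C.WU
  have crs := C.card_rsW
  have hsub : E.filter (fun e => ¬ ∃ w ∈ t, w ∈ e) ⊆
      {{x, p, q}, {x, p, w}, {x, q, w}} ∪ W.image (fun v => {p, q, v}) ∪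
      (((insert r (insert s W)).erase w).powersetCard 2).image (insert x) := by
    intro e he
    obtain ⟨he, hd⟩ := Finset.mem_filter.1 he
    push Not at hd
    simp only [Finset.mem_union]
    by_cases hx : x ∈ e
    · have k1 := fun u => C.A1 ha hb h hE (by grind) (by grind) he hx hd (u := u)
      have cov := C.cov e he
      obtain ⟨y, z, hyz, hxy, hxz, rfl⟩ := three_of_mem_s14 (C.card3 e he) hx
      rcases A3 k1 (by grind) hyz with h1 | ⟨h1, h2⟩
      · simp only [h1, true_or]
      right
      have hy := cov y (by simp)
      have hz := cov z (by simp)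
      have hy' := hd y
      have hz' := hd z
      exact mem_link hyz (by grind) (by grind)
    · rcases C.A2 ha hb h he hx hd with ⟨v, hv, h0⟩ | ⟨v, hv, h0⟩
      · left; right; exact Finset.mem_image.2 ⟨v, hv, h0.symm⟩
      · subst h0; exact absurd ⟨v, hv, he⟩ hE'
  refine (Finset.card_le_card hsub).trans ?_
  have := card_union_le_of (card_union_le_of
      (card_three_le' {x, p, q} {x, p, w} {x, q, w})
      (Finset.card_image_le (s := W) (f := fun v => ({p, q, v} : Finset ℕ))))
      (card_link x ((insert r (insert s W)).erase w))
  have h2 : ((insert r (insert s W)).erase w).card = W.card + 1 := by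
    rw [Finset.card_erase_of_mem (by grind), crs]; omega
  rw [h2, choose_two_succ] at this
  omega

/-- Either the bound holds, or all edges are `t`, inside `t ∪ {x}`, or through `x` avoiding `t`. -/
lemma main (C : Conf_s14 E t W p q x r s) (hm : 1 ≤ W.card)
    (h1 : ∃ e ∈ E, e ≠ t ∧ ∃ w ∈ t, w ∈ e)
    (hco : ¬ ∀ e ∈ E, e ⊆ insert x t ∨ (x ∈ e ∧ ∀ w ∈ t, w ∉ e)) :
    E.card < 10 + (W.card + 2).choose 2 := by
  have key : (E.filter (fun e => ¬ ∃ w ∈ t, w ∈ e)).card ≤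
      W.card.choose 2 + 2 * W.card + 6 := by
    by_cases hB1 : ∃ c ∈ t, ({p, q, c} : Finset ℕ) ∈ E
    · obtain ⟨c, hc, h⟩ := hB1; exact C.caseB hm hc h
    by_cases hB2 : ∃ c ∈ t, ({r, s, c} : Finset ℕ) ∈ E
    · obtain ⟨c, hc, h⟩ := hB2; exact C.symm.caseB hm hc h
    have hA : ∀ e ∈ E, e ≠ t → ∀ w ∈ t, w ∈ e → ∃ y ∈ t, y ≠ w ∧ e = {x, w, y} := by
      intro e he hne w hw hwe
      rcases C.F3 he hw hwe with h0 | h0 | rfl | rfl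
      · exact absurd h0 hne
      · exact h0
      · exact absurd ⟨w, hw, he⟩ hB1
      · exact absurd ⟨w, hw, he⟩ hB2
    obtain ⟨e, he, hne, w, hw, hwe⟩ := h1
    obtain ⟨y, hy, -, rfl⟩ := hA e he hne w hw hwe
    push Not at hco
    obtain ⟨f, hf, hf1, hf2⟩ := hco
    have hft : ∀ v ∈ t, v ∉ f := by
      intro v hv hvf
      apply hf1
      by_cases hfe : f = t
      · subst hfe; exact Finset.subset_insert _ _
      · obtain ⟨z, hz, -, rfl⟩ := hA f hf hfe v hv hvf
        intro u; grind
    have hxf : x ∉ f := by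
      intro hx; obtain ⟨v, hv, hvf⟩ := hf2 hx; exact hft v hv hvf
    rcases C.A2 hw hy he hf hxf hft with ⟨v, hv, rfl⟩ | ⟨v, hv, rfl⟩
    · exact C.caseA2 hw hy he hv hf
    · exact C.symm.caseA2 hw hy he hv hf
  have h4 := C.T4
  have := Finset.card_filter_add_card_filter_not (s := E) (fun e => ∃ w ∈ t, w ∈ e)
  rw [choose_two_succ, choose_two_succ]
  omega

end Conf_s14

lemma path_of_free {H : ThreeGraph} (hval : H.IsValid) (hP : H.Free pathP) :
    ∀ e₁ ∈ H.edges, ∀ e₂ ∈ H.edges, ∀ e₃ ∈ H.edges, ∀ c d, c ∈ e₁ → c ∈ e₂ → d ∈ e₂ → d ∈ e₃ →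
    (∀ v ∈ e₁, v ∉ e₃) → (∀ v ∈ e₁, v ∈ e₂ → v = c) → (∀ v ∈ e₂, v ∈ e₃ → v = d) → False := by
  intro e₁ h₁ e₂ h₂ e₃ h₃ c d hc1 hc2 hd2 hd3 h13 h12 h23
  have hcd : c ≠ d := by rintro rfl; exact h13 c hc1 hd3
  have V1 := (hval _ h₁).2
  have V2 := (hval _ h₂).2
  have V3 := (hval _ h₃).2
  obtain ⟨a, b, hab, hca, hcb, rfl⟩ := three_of_mem_s14 (hval _ h₁).1 hc1
  obtain ⟨m, hcm, hdm, rfl⟩ := three_of_mem2_s14 (hval _ h₂).1 hc2 hd2 hcd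
  obtain ⟨g, h, hgh, hdg, hdh, rfl⟩ := three_of_mem_s14 (hval _ h₃).1 hd3
  simp only [Finset.insert_subset_iff, Finset.singleton_subset_iff] at V1 V2 V3
  simp only [Finset.mem_insert, Finset.mem_singleton, forall_eq_or_imp, forall_eq, not_or]
    at h13 h12 h23
  have nod : [a, b, c, m, d, g, h].Nodup := by
    simp only [List.nodup_cons, List.mem_cons, List.not_mem_nil, or_false, not_or,
      not_false_eq_true, List.nodup_nil, and_true]
    grind
  apply hP
  refine ⟨fun i => [a, b, c, m, d, g, h].getD i 0, ?_, ?_, ?_⟩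
  · intro i hi j hj hij
    have hi' : i < [a, b, c, m, d, g, h].length := by
      simp only [pathP, Finset.coe_insert, Finset.coe_singleton, Set.mem_insert_iff,
        Set.mem_singleton_iff] at hi
      simp only [List.length_cons, List.length_nil]; omega
    have hj' : j < [a, b, c, m, d, g, h].length := by
      simp only [pathP, Finset.coe_insert, Finset.coe_singleton, Set.mem_insert_iff,
        Set.mem_singleton_iff] at hj
      simp only [List.length_cons, List.length_nil]; omega
    simp only [List.getD_eq_getElem _ _ hi', List.getD_eq_getElem _ _ hj'] at hij
    exact (nod.getElem_inj_iff).1 hij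
  · clear h13 h12 h23 nod hP
    intro v hv
    simp only [pathP, Finset.mem_insert, Finset.mem_singleton] at hv
    rcases hv with rfl | rfl | rfl | rfl | rfl | rfl | rfl <;> simp <;> tauto
  · clear h13 h12 h23 nod hP
    intro e he
    simp only [pathP, Finset.mem_insert, Finset.mem_singleton] at he
    rcases he with rfl | rfl | rfl
    · convert h₁ using 1
      ext v; simp; tauto
    · convert h₂ using 1
      ext v; simp; tauto
    · convert h₃ using 1
      simp [Finset.image_insert]

lemma tri_of_free {H : ThreeGraph} (hval : H.IsValid) (hC : H.Free triangleC) :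
    ∀ e₁ ∈ H.edges, ∀ e₂ ∈ H.edges, ∀ e₃ ∈ H.edges, ∀ a b c, a ∈ e₁ → a ∈ e₂ → b ∈ e₂ → b ∈ e₃ →
    c ∈ e₃ → c ∈ e₁ → a ≠ b →
    (∀ v ∈ e₁, v ∈ e₂ → v = a) → (∀ v ∈ e₂, v ∈ e₃ → v = b) →
    (∀ v ∈ e₃, v ∈ e₁ → v = c) → False := by
  intro e₁ h₁ e₂ h₂ e₃ h₃ a b c ha1 ha2 hb2 hb3 hc3 hc1 hab h12 h23 h31
  have hac : a ≠ c := by rintro rfl; exact hab (h23 a ha2 hc3)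
  have hbc : b ≠ c := by rintro rfl; exact hab (h12 b hc1 hb2).symm
  have V1 := (hval _ h₁).2
  have V2 := (hval _ h₂).2
  have V3 := (hval _ h₃).2
  obtain ⟨k, hak, hck, rfl⟩ := three_of_mem2_s14 (hval _ h₁).1 ha1 hc1 hac
  obtain ⟨l, hal, hbl, rfl⟩ := three_of_mem2_s14 (hval _ h₂).1 ha2 hb2 hab
  obtain ⟨m, hbm, hcm, rfl⟩ := three_of_mem2_s14 (hval _ h₃).1 hb3 hc3 hbc
  simp only [Finset.insert_subset_iff, Finset.singleton_subset_iff] at V1 V2 V3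
  simp only [Finset.mem_insert, Finset.mem_singleton, forall_eq_or_imp, forall_eq]
    at h12 h23 h31
  have nod : [c, k, a, l, b, m].Nodup := by
    simp only [List.nodup_cons, List.mem_cons, List.not_mem_nil, or_false, not_or,
      not_false_eq_true, List.nodup_nil, and_true]
    grind
  apply hC
  refine ⟨fun i => [c, k, a, l, b, m].getD i 0, ?_, ?_, ?_⟩
  · intro i hi j hj hij
    have hi' : i < [c, k, a, l, b, m].length := by
      simp only [triangleC, Finset.coe_insert, Finset.coe_singleton, Set.mem_insert_iff,
        Set.mem_singleton_iff] at hi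
      simp only [List.length_cons, List.length_nil]; omega
    have hj' : j < [c, k, a, l, b, m].length := by
      simp only [triangleC, Finset.coe_insert, Finset.coe_singleton, Set.mem_insert_iff,
        Set.mem_singleton_iff] at hj
      simp only [List.length_cons, List.length_nil]; omega
    simp only [List.getD_eq_getElem _ _ hi', List.getD_eq_getElem _ _ hj'] at hij
    exact (nod.getElem_inj_iff).1 hij
  · clear h12 h23 h31 nod hC
    intro v hv
    simp only [triangleC, Finset.mem_insert, Finset.mem_singleton] at hv
    rcases hv with rfl | rfl | rfl | rfl | rfl | rfl <;> simp <;> tauto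
  · clear h12 h23 h31 nod hC
    intro e he
    simp only [triangleC, Finset.mem_insert, Finset.mem_singleton] at he
    rcases he with rfl | rfl | rfl
    · convert h₁ using 1
      ext v; simp; tauto
    · convert h₂ using 1
      ext v; simp; tauto
    · convert h₃ using 1
      ext v; simp; tauto

lemma comet_contains {n : ℕ} (hn : 4 ≤ n) {H : ThreeGraph} (hval : H.IsValid)
    (hcard : H.verts.card = n) {x : ℕ} {t : Finset ℕ} (hx : x ∈ H.verts) (ht : t ⊆ H.verts)
    (hxt : x ∉ t) (htc : t.card = 3)
    (h : ∀ e ∈ H.edges, e ⊆ insert x t ∨ (x ∈ e ∧ ∀ w ∈ t, w ∉ e)) :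
    (comet n).ContainsCopy H := by
  have hsub : insert x t ⊆ H.verts := Finset.insert_subset hx ht
  have hc1 : (H.verts \ insert x t).card = (Finset.Ico 4 n).card := by
    rw [Finset.card_sdiff_of_subset hsub, Finset.card_insert_of_notMem hxt, hcard, htc]; simp
  let φ := Finset.equivOfCardEq hc1
  have hc2 : t.card = ({1, 2, 3} : Finset ℕ).card := by rw [htc]; rfl
  let ψ := Finset.equivOfCardEq hc2
  let f : ℕ → ℕ := fun v => if h1 : v ∈ H.verts \ insert x t then (φ ⟨v, h1⟩ : ℕ) else
    if h2 : v ∈ t then (ψ ⟨v, h2⟩ : ℕ) else 0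
  have f1 : ∀ v (h1 : v ∈ H.verts \ insert x t), f v = φ ⟨v, h1⟩ := by
    intro v h1; simp only [f, h1, dif_pos]
  have nt : ∀ v ∈ t, v ∉ H.verts \ insert x t := by
    intro v hv; simp [hv]
  have f2 : ∀ v (h2 : v ∈ t), f v = ψ ⟨v, h2⟩ := by
    intro v h2; simp only [f, dif_neg (nt v h2), dif_pos h2]
  have f3 : f x = 0 := by simp [f, hxt]
  have r1 : ∀ v ∈ H.verts \ insert x t, 4 ≤ f v ∧ f v < n := by
    intro v h1; rw [f1 v h1]; exact Finset.mem_Ico.1 (φ ⟨v, h1⟩).2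
  have r2 : ∀ v ∈ t, f v ∈ ({1, 2, 3} : Finset ℕ) := by
    intro v h1; rw [f2 v h1]; exact (ψ ⟨v, h1⟩).2
  have r2' : ∀ v ∈ t, 1 ≤ f v ∧ f v ≤ 3 := by
    intro v hv; have := r2 v hv
    simp only [Finset.mem_insert, Finset.mem_singleton] at this; omega
  have tri : ∀ v ∈ H.verts, v = x ∨ v ∈ t ∨ v ∈ H.verts \ insert x t := by
    intro v hv; simp only [Finset.mem_sdiff, Finset.mem_insert]; tauto
  have inj : Set.InjOn f ↑H.verts := by
    intro u hu v hv huv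
    rcases tri u hu with rfl | h1 | h1 <;> rcases tri v hv with rfl | h2 | h2
    · rfl
    · have := r2' v h2; omega
    · have := r1 v h2; omega
    · have := r2' u h1; omega
    · rw [f2 u h1, f2 v h2] at huv
      simpa using ψ.injective (Subtype.ext huv)
    · have := r2' u h1; have := r1 v h2; omega
    · have := r1 u h1; omega
    · have := r1 u h1; have := r2' v h2; omega
    · rw [f1 u h1, f1 v h2] at huv
      simpa using φ.injective (Subtype.ext huv)
  refine ⟨f, inj, ?_, ?_⟩
  · intro v hv
    simp only [comet, Finset.mem_range]
    rcases tri v hv with rfl | h1 | h1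
    · omega
    · have := r2' v h1; omega
    · exact (r1 v h1).2
  · intro e he
    have hev := (hval e he).2
    have hc : (e.image f).card = 3 := by
      rw [Finset.card_image_of_injOn (inj.mono (by exact_mod_cast hev)), (hval e he).1]
    simp only [comet, Finset.mem_union, Finset.mem_filter, Finset.mem_powersetCard]
    rcases h e he with h1 | ⟨h1, h2⟩
    · left
      refine ⟨?_, hc⟩
      intro w hw
      obtain ⟨v, hv, rfl⟩ := Finset.mem_image.1 hw
      rcases Finset.mem_insert.1 (h1 hv) with rfl | h3
      · rw [f3]; simp
      · exact Finset.mem_insert_of_mem (r2 v h3)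
    · right
      refine ⟨⟨?_, hc⟩, Finset.mem_image.2 ⟨x, h1, f3⟩⟩
      intro w hw
      obtain ⟨v, hv, rfl⟩ := Finset.mem_image.1 hw
      rcases tri v (hev hv) with rfl | h3 | h3
      · rw [f3]; simp
      · exact absurd hv (h2 v h3)
      · exact Finset.mem_insert_of_mem (Finset.mem_Ico.2 (r1 v h3))

/-- Fact 3: in the Setup with `n ≥ 13`, if `H₁ ≠ ∅`, `H` is not contained in the
comet `Co(n)`, and `|W₁| = 3`, then `|H| < 10 + binom(n-6,2)`. -/
theorem fact_W1_three (n : ℕ) (hn : 13 ≤ n) (H : ThreeGraph)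
    (u0 u1 u2 u3 u4 : ℕ) (t : Finset ℕ)
    (hval : H.IsValid) (hcard : H.verts.card = n) (hconn : H.Connected)
    (hP : H.Free pathP) (hC : H.Free triangleC)
    (hdist : List.Pairwise (· ≠ ·) [u0, u1, u2, u3, u4])
    (he1 : ({u0, u1, u2} : Finset ℕ) ∈ H.edges)
    (he2 : ({u2, u3, u4} : Finset ℕ) ∈ H.edges)
    (ht : t ∈ H.edges) (htdisj : Disjoint t ({u0, u1, u2, u3, u4} : Finset ℕ))
    (hH1 : (H1set H {u0, u1, u2, u3, u4}).Nonempty)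
    (hCo : ¬ (comet n).ContainsCopy H)
    (hW1 : (W1set H {u0, u1, u2, u3, u4}).card = 3) :
    H.edges.card < 10 + (n - 6).choose 2 := by
  have hd : u0 ≠ u1 ∧ u0 ≠ u2 ∧ u0 ≠ u3 ∧ u0 ≠ u4 ∧ u1 ≠ u2 ∧ u1 ≠ u3 ∧ u1 ≠ u4 ∧
      u2 ≠ u3 ∧ u2 ≠ u4 ∧ u3 ≠ u4 := by
    simp at hdist; tauto
  have hUV : ({u0, u1, u2, u3, u4} : Finset ℕ) ⊆ H.verts := by
    have h1 := (hval _ he1).2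
    have h2 := (hval _ he2).2
    simp only [Finset.insert_subset_iff, Finset.singleton_subset_iff] at h1 h2 ⊢
    tauto
  have hUc : ({u0, u1, u2, u3, u4} : Finset ℕ).card = 5 := by
    rw [Finset.card_insert_of_notMem, Finset.card_insert_of_notMem,
      Finset.card_insert_of_notMem, Finset.card_insert_of_notMem, Finset.card_singleton] <;>
    simp <;> tauto
  have htV := (hval _ ht).2
  have htc := (hval _ ht).1
  have hsubW1 : ∀ e ∈ H.edges, Disjoint e ({u0, u1, u2, u3, u4} : Finset ℕ) →
      e ⊆ W1set H {u0, u1, u2, u3, u4} := by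
    intro e he hdis v hv
    have hsW : e ⊆ Wset H {u0, u1, u2, u3, u4} := by
      intro a ha
      exact Finset.mem_sdiff.2 ⟨(hval _ he).2 ha, fun h => Finset.disjoint_left.1 hdis ha h⟩
    refine Finset.mem_sdiff.2 ⟨hsW hv, fun h => ?_⟩
    exact (Finset.mem_filter.1 h).2 e he hsW hv
  have heq : ∀ e ∈ H.edges, Disjoint e ({u0, u1, u2, u3, u4} : Finset ℕ) →
      e = W1set H {u0, u1, u2, u3, u4} := by
    intro e he hdis
    exact Finset.eq_of_subset_of_card_le (hsubW1 e he hdis) (by rw [hW1, (hval _ he).1])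
  have htW1 := heq t ht htdisj
  have htU : ∀ v ∈ t, v ≠ u0 ∧ v ≠ u1 ∧ v ≠ u2 ∧ v ≠ u3 ∧ v ≠ u4 := by
    intro v hv
    have := Finset.disjoint_left.1 htdisj hv
    simpa using this
  have hWc : ((H.verts \ {u0, u1, u2, u3, u4}) \ t).card = n - 8 := by
    rw [Finset.card_sdiff_of_subset, Finset.card_sdiff_of_subset hUV, hcard, hUc, htc]
    · omega
    · intro v hv
      exact Finset.mem_sdiff.2 ⟨htV hv, Finset.disjoint_left.1 htdisj hv⟩
  have C : Conf_s14 H.edges t ((H.verts \ {u0, u1, u2, u3, u4}) \ t) u0 u1 u2 u3 u4 := by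
    refine ⟨fun e he => (hval e he).1, path_of_free hval hP, tri_of_free hval hC, hd, ?_, he2, ht,
      ?_, ?_, ?_, ?_⟩
    · convert he1 using 1
      ext v; simp; tauto
    · intro e he v hv
      have := (hval _ he).2 hv
      simp only [Finset.mem_sdiff, Finset.mem_insert, Finset.mem_singleton]
      tauto
    · intro v hv
      have := htU v hv
      simp only [Finset.mem_sdiff]
      tauto
    · intro v hv
      simp only [Finset.mem_sdiff, Finset.mem_insert, Finset.mem_singleton] at hv
      tauto
    · intro e he h0 h1 h2 h3 h4
      rw [htW1]
      refine heq e he (Finset.disjoint_right.2 ?_)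
      intro v hv
      simp only [Finset.mem_insert, Finset.mem_singleton] at hv
      rcases hv with rfl | rfl | rfl | rfl | rfl <;> assumption
  have hmain := C.main (by omega) ?_ ?_
  · rw [hWc] at hmain
    rwa [show n - 8 + 2 = n - 6 by omega] at hmain
  · obtain ⟨e, he⟩ := hH1
    obtain ⟨he, ⟨a, ha⟩, ⟨b, hb⟩⟩ := Finset.mem_filter.1 he
    rw [Finset.mem_inter] at ha hb
    refine ⟨e, he, ?_, b, ?_, hb.1⟩
    · rintro rfl
      exact Finset.disjoint_left.1 htdisj ha.1 ha.2
    · rw [htW1]; exact hb.2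
  · intro hall
    refine hCo (comet_contains (by omega) hval hcard (x := u2) (t := t) (hUV (by simp)) htV ?_ htc hall)
    intro h; exact (htU u2 h).2.2.1 rfl
end
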